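/- Let p be a prime, q a power of p. Let w ≥ 25 be a real number and b, c, d ∈ F_q[T] distinct polynomials of degree at least one. Let 0 < η < √w/4 and put m_i := ⌊(⌊w^{i+1}⌋ − ⌊w^i − 1⌋)/⌊η w^i⌋⌋ for all i ≥ 1. Define a_{n,w,η} = c if n = ⌊w^i⌋ for some integer i ≥ 0; a_{n,w,η} = d if n ≠ ⌊w^i⌋ for all integers i ≥ 0 and n = ⌊w^j⌋ + m⌊η w^j⌋ for some integers 1 ≤ m ≤ m_j and j ≥ 1; and a_{n,w,η} = b otherwise. Set ξ_{w,η} := [0, a_{1,w,η}, a_{2,w,η}, …] ∈ F_q((T^{-1})). Then w_2*(ξ_{w,η}) = (2w − 2 − η)/(2 + η) and w_2(ξ_{w,η}) = (2w − η)/(2 + η); in particular w_2(ξ_{w,η}) − w_2*(ξ_{w,η}) = 2/(2 + η). -/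

import Mathlib

open Polynomial Filter
open scoped ENNReal

noncomputable section

namespace Ooto

variable (Fq : Type) [Field Fq] [Fintype Fq]

/-- `F_q((T⁻¹))`, realized as formal Laurent series in the variable `X = T⁻¹`. -/
abbrev K := LaurentSeries Fq

/-- The element `T = X⁻¹` of `F_q((T⁻¹))`. -/
def TT : K Fq := HahnSeries.single (-1 : ℤ) (1 : Fq)

/-- The natural embedding of `F_q[T]` into `F_q((T⁻¹))`, sending `T` to `T`. -/
def polyToK : Polynomial Fq →+* K Fq := Polynomial.eval₂RingHom HahnSeries.C (TT Fq)

open Classical in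
/-- The absolute value on `F_q((T⁻¹))`: `|0| = 0` and `|ξ| = q^{-N}` where `N` is the order
of `ξ` as a series in `T⁻¹`. -/
def kabs (f : K Fq) : ℝ := if f = 0 then 0 else (Fintype.card Fq : ℝ) ^ (-f.order)

/-- A fixed algebraic closure of `F_q((T⁻¹))`. -/
abbrev L := AlgebraicClosure (K Fq)

def toL : K Fq →+* L Fq := algebraMap (K Fq) (L Fq)

def φ : Polynomial Fq →+* L Fq := (toL Fq).comp (polyToK Fq)

/-- Evaluation of `P ∈ (F_q[T])[X]` at `ξ ∈ F_q((T⁻¹))`. -/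
def evalK (P : Polynomial (Polynomial Fq)) (ξ : K Fq) : K Fq :=
  Polynomial.eval₂ (polyToK Fq) ξ P

/-- Evaluation of `P ∈ (F_q[T])[X]` at a point of the algebraic closure. -/
def evalL (P : Polynomial (Polynomial Fq)) (α : L Fq) : L Fq :=
  Polynomial.eval₂ (φ Fq) α P

/-- Height of a polynomial over `F_q[T]`: the maximum of the absolute values of its
coefficients. -/
def Hpoly (P : Polynomial (Polynomial Fq)) : ℝ := ⨆ i : ℕ, kabs Fq (polyToK Fq (P.coeff i))

/-- `P` is the minimal polynomial of `α`: a non-constant irreducible primitive polynomial in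
`(F_q[T])[X]` whose leading coefficient is monic in `T`, vanishing at `α`. -/
def IsMinPolyOf (P : Polynomial (Polynomial Fq)) (α : L Fq) : Prop :=
  0 < P.natDegree ∧ Irreducible P ∧ P.IsPrimitive ∧ (P.leadingCoeff).Monic ∧ evalL Fq P α = 0

/-- `α` is algebraic over `F_q(T)`. -/
def IsAlgElem (α : L Fq) : Prop := ∃ P, IsMinPolyOf Fq P α

open Classical in
/-- The minimal polynomial of an algebraic element (junk value `0` otherwise). -/
def minPolyPrim (α : L Fq) : Polynomial (Polynomial Fq) :=
  if h : IsAlgElem Fq α then h.choose else 0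

/-- Degree of an algebraic element. -/
def degAlg (α : L Fq) : ℕ := (minPolyPrim Fq α).natDegree

/-- Height of an algebraic element. -/
def heightAlg (α : L Fq) : ℝ := Hpoly Fq (minPolyPrim Fq α)

/-- Inseparable degree of a polynomial `P ∈ (F_q[T])[X]`: the largest power `f = p^j` of the
characteristic such that `P(X) = R(X^f)` for some `R`. -/
def insepDeg (P : Polynomial (Polynomial Fq)) : ℕ :=
  (ringChar Fq) ^ sSup {j : ℕ | ∃ R : Polynomial (Polynomial Fq),
    P = R.comp (Polynomial.X ^ (ringChar Fq) ^ j)}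

/-- Inseparable degree of an algebraic element. -/
def insepAlg (α : L Fq) : ℕ := insepDeg Fq (minPolyPrim Fq α)

/-- `α'` is the Galois conjugate of the quadratic element `α` (equal to `α` itself in the
inseparable case): the minimal polynomial of `α` factors as `A(X - α)(X - α')`. -/
def IsConjOf (α' α : L Fq) : Prop :=
  (minPolyPrim Fq α).natDegree = 2 ∧
  (minPolyPrim Fq α).map (φ Fq) =
    Polynomial.C (φ Fq (minPolyPrim Fq α).leadingCoeff) *
      (Polynomial.X - Polynomial.C α) * (Polynomial.X - Polynomial.C α')

/-- `v` is an absolute value on the algebraic closure of `F_q((T⁻¹))` extending `kabs`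
(such an extension exists and is unique). -/
structure IsAbsExt (v : L Fq → ℝ) : Prop where
  eq_zero_iff : ∀ x, v x = 0 ↔ x = 0
  map_mul : ∀ x y, v (x * y) = v x * v y
  add_le : ∀ x y, v (x + y) ≤ max (v x) (v y)
  nonneg : ∀ x, 0 ≤ v x
  extends_kabs : ∀ f : K Fq, v (toL Fq f) = kabs Fq f

/-- The exponent `w_n(ξ)`: the supremum of the real numbers `w` such that
`0 < |P(ξ)| ≤ H(P)^{-w}` for infinitely many `P ∈ (F_q[T])[X]` of degree at most `n`. -/
def wExp (n : ℕ) (ξ : K Fq) : EReal :=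
  sSup {x : EReal | ∃ w : ℝ, x = (w : EReal) ∧
    {P : Polynomial (Polynomial Fq) | P.natDegree ≤ n ∧ 0 < kabs Fq (evalK Fq P ξ) ∧
      kabs Fq (evalK Fq P ξ) ≤ Hpoly Fq P ^ (-w)}.Infinite}

/-- The exponent `w_n^*(ξ)`: the supremum of the real numbers `w` such that
`0 < |ξ - α| ≤ H(α)^{-w-1}` for infinitely many algebraic `α` of degree at most `n`. -/
def wStarExp (v : L Fq → ℝ) (n : ℕ) (ξ : K Fq) : EReal :=
  sSup {x : EReal | ∃ w : ℝ, x = (w : EReal) ∧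
    {α : L Fq | IsAlgElem Fq α ∧ degAlg Fq α ≤ n ∧ 0 < v (toL Fq ξ - α) ∧
      v (toL Fq ξ - α) ≤ heightAlg Fq α ^ (-w - 1)}.Infinite}

/-- `pSeq a n = p_{n-1}`, the numerators of the convergents of `[a 0; a 1, a 2, …]`
(with `p_{-1} = 1`). -/
def pSeq (a : ℕ → Polynomial Fq) : ℕ → Polynomial Fq
  | 0 => 1
  | 1 => a 0
  | (n+2) => a (n+1) * pSeq a (n+1) + pSeq a n

/-- `qSeq a n = q_{n-1}`, the denominators of the convergents of `[a 0; a 1, a 2, …]`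
(with `q_{-1} = 0`). -/
def qSeq (a : ℕ → Polynomial Fq) : ℕ → Polynomial Fq
  | 0 => 0
  | 1 => 1
  | (n+2) => a (n+1) * qSeq a (n+1) + qSeq a n

/-- `ξ` has continued fraction expansion `[a 0; a 1, a 2, …]`: each partial quotient `a n`
(`n ≥ 1`) has degree at least one and `|ξ - p_n/q_n| = |q_n|⁻¹|q_{n+1}|⁻¹` for all `n ≥ 0`. -/
def IsCFOf (ξ : K Fq) (a : ℕ → Polynomial Fq) : Prop :=
  (∀ n, 1 ≤ n → 1 ≤ (a n).natDegree) ∧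
  ∀ n : ℕ,
    kabs Fq (ξ - polyToK Fq (pSeq Fq a (n+1)) / polyToK Fq (qSeq Fq a (n+1))) =
      (kabs Fq (polyToK Fq (qSeq Fq a (n+1))) * kabs Fq (polyToK Fq (qSeq Fq a (n+2))))⁻¹

/-- The sequence of partial quotients of `[0; b 0, b 1, b 2, …]`. -/
def cfA (b : ℕ → Polynomial Fq) : ℕ → Polynomial Fq := fun n => if n = 0 then 0 else b (n - 1)

/-- `qden b n` is the denominator `q_n` of the `n`-th convergent of `[0; b 0, b 1, …]`. -/
def qden (b : ℕ → Polynomial Fq) (n : ℕ) : Polynomial Fq := qSeq Fq (cfA Fq b) (n + 1)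

/-- `V^w` for a finite word `V` and a real `w ≥ 0`: `⌊w⌋` copies of `V` followed by the prefix
of `V` of length `⌈(w - ⌊w⌋)|V|⌉`. -/
def wordPow {A : Type*} (V : List A) (w : ℝ) : List A :=
  (List.replicate ⌊w⌋₊ V).flatten ++ V.take ⌈(w - ⌊w⌋₊) * V.length⌉₊

/-- The finite word `l` is a prefix of the infinite word `b`. -/
def IsPrefixOfSeq {A : Type*} (l : List A) (b : ℕ → A) : Prop :=
  ∀ (i : ℕ) (h : i < l.length), l.get ⟨i, h⟩ = b i

/-- Condition `(*)_ρ` for an infinite word. -/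
def SatisfiesCond {A : Type*} (b : ℕ → A) (ρ : ℝ) : Prop :=
  ∃ (U V : ℕ → List A) (w : ℕ → ℝ),
    (∀ n, V n ≠ []) ∧ (∀ n, 0 ≤ w n) ∧
    (∀ n, IsPrefixOfSeq (U n ++ wordPow (V n) (w n)) b) ∧
    (∀ n, ρ * (((U n).length + (V n).length : ℕ) : ℝ) ≤
      (((U n).length + (wordPow (V n) (w n)).length : ℕ) : ℝ)) ∧
    StrictMono fun n => (wordPow (V n) (w n)).length

/-- The Diophantine exponent of an infinite word: the supremum of the `ρ` such that the word
satisfies Condition `(*)_ρ`. -/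
def dioExp {A : Type*} (b : ℕ → A) : EReal :=
  sSup {x : EReal | ∃ ρ : ℝ, x = (ρ : EReal) ∧ SatisfiesCond b ρ}

/-- The complexity function: the number of distinct blocks of `n` consecutive letters. -/
def complexity {A : Type*} (b : ℕ → A) (n : ℕ) : ℕ∞ :=
  {w : Fin n → A | ∃ i : ℕ, ∀ k : Fin n, w k = b (i + k)}.encard

/-- The infinite word `b` is ultimately periodic. -/
def UltimatelyPeriodic {A : Type*} (b : ℕ → A) : Prop :=
  ∃ N T : ℕ, 0 < T ∧ ∀ n, N ≤ n → b (n + T) = b n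

/-!
Let `R j` be the place of the `j`-th letter `c`. Between `R j` and `R (j + 1)` the partial quotients
are periodic with period `S j = ⌊η w ^ j⌋`, so `ξ` is very close to the quadratic number whose
continued fraction repeats this period forever; its conjugate is also fairly close. As almost all
letters are `b`, with `δ = deg b`, the quadratic polynomial `P j` with these two roots has height
about `q ^ (δ (2 + η) w ^ j)`, derivative about `q ^ (δ η w ^ j)` at `ξ` and value about
`q ^ (-δ (2 w - η) w ^ j)` at `ξ`, which gives both lower bounds. The content of `P j` divides
`b - d`, so these sizes are those of a primitive polynomial up to a bounded factor.

Conversely, let `Q` approximate `ξ` too well, and take `j` with the height of `Q` between the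
thresholds of `P j` and `P (j + 1)`, consecutive thresholds overlapping because `w` is large. The
resultant of `P j` and `Q` has absolute value less than one, so it vanishes; and `Q` cannot merely
share a rational root with `P j`, because `ξ` is badly approximable. Hence `Q` is proportional to
`P j`, whose roots give the exact exponents.
-/

variable {Fq} {F : Type} [Field F]

local notation "𝔮" => (Fintype.card Fq : ℝ)

section Quadratic

variable {E : Type*} [Field E] {u : AbsoluteValue E ℝ} {a₀ a₁ a₂ y : E}

lemma abv_coeff_zero_le_of_root (hu : IsNonarchimedean u) (h : u a₂ * u a₀ < u a₁ ^ 2)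
    (hy : a₂ * y ^ 2 + a₁ * y + a₀ = 0) : u a₀ ≤ u a₁ * u y := by
  by_contra! hlt
  have ha₁ : 0 < u a₁ := by
    refine u.pos ?_
    rintro rfl
    have := mul_nonneg (u.nonneg a₂) (u.nonneg a₀)
    simp only [map_zero] at h
    linarith
  have hfactor : u a₀ = u (a₂ * y + a₁) * u y := by
    rw [← map_mul, ← u.map_neg a₀]
    congr 1
    linear_combination -hy
  have hlead : u (a₂ * y) ≤ u a₁ := by
    rw [map_mul]
    refine le_of_mul_le_mul_left ?_ ha₁
    nlinarith [mul_le_mul_of_nonneg_left hlt.le (u.nonneg a₂)]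
  have hle := mul_le_mul_of_nonneg_right ((hu (a₂ * y) a₁).trans (max_le hlead le_rfl)) (u.nonneg y)
  linarith

lemma exists_root_abv_le [IsAlgClosed E] (hu : IsNonarchimedean u) (ha₁ : a₁ ≠ 0) :
    ∃ y, a₂ * y ^ 2 + a₁ * y + a₀ = 0 ∧ u a₁ * u y ≤ u a₀ := by
  by_cases ha₂ : a₂ = 0
  · refine ⟨-a₀ / a₁, by rw [ha₂]; field_simp; ring, le_of_eq ?_⟩
    rw [← map_mul, mul_div_cancel₀ _ ha₁, u.map_neg]
  obtain ⟨y₁, hy₁⟩ := IsAlgClosed.exists_root (C a₂ * X ^ 2 + C a₁ * X + C a₀)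
    (by rw [degree_quadratic ha₂]; decide)
  replace hy₁ : a₂ * y₁ ^ 2 + a₁ * y₁ + a₀ = 0 := by simpa [IsRoot] using hy₁
  obtain ⟨y₂, hsum⟩ : ∃ y₂, a₁ = -(a₂ * (y₁ + y₂)) := ⟨-a₁ / a₂ - y₁, by field_simp; ring⟩
  have hprod : a₀ = a₂ * y₁ * y₂ := by
    rw [hsum] at hy₁
    linear_combination hy₁
  have hy₂ : a₂ * y₂ ^ 2 + a₁ * y₂ + a₀ = 0 := by rw [hsum, hprod]; ring
  rcases le_total (u y₁) (u y₂) with hle | hle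
  · refine ⟨y₁, hy₁, ?_⟩
    have hmax : u (y₁ + y₂) ≤ u y₂ := (hu y₁ y₂).trans (max_le hle le_rfl)
    calc u a₁ * u y₁ = u a₂ * u y₁ * u (y₁ + y₂) := by rw [hsum, u.map_neg, map_mul]; ring
      _ ≤ u a₂ * u y₁ * u y₂ := by gcongr
      _ = u a₀ := by rw [hprod, map_mul, map_mul]
  · refine ⟨y₂, hy₂, ?_⟩
    have hmax : u (y₁ + y₂) ≤ u y₁ := (hu y₁ y₂).trans (max_le le_rfl hle)
    calc u a₁ * u y₂ = u a₂ * u y₂ * u (y₁ + y₂) := by rw [hsum, u.map_neg, map_mul]; ring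
      _ ≤ u a₂ * u y₂ * u y₁ := by gcongr
      _ = u a₀ := by rw [hprod, map_mul, map_mul]; ring

end Quadratic

section Eval

variable {R S : Type*} [CommRing R] [CommRing S] (f : R →+* S) {P : R[X]}

lemma eval₂_of_natDegree_le_two (hP : P.natDegree ≤ 2) (x : S) :
    eval₂ f x P = f (P.coeff 2) * x ^ 2 + f (P.coeff 1) * x + f (P.coeff 0) := by
  rw [eval₂_eq_sum_range' f (Nat.lt_succ_of_le hP)]
  simp only [Finset.sum_range_succ, Finset.sum_range_zero]
  ring

lemma eval₂_derivative_of_natDegree_le_two (hP : P.natDegree ≤ 2) (x : S) :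
    eval₂ f x (derivative P) = 2 * f (P.coeff 2) * x + f (P.coeff 1) := by
  rw [eval₂_of_natDegree_le_two f ((natDegree_derivative_le P).trans (by omega))]
  simp only [coeff_derivative, coeff_eq_zero_of_natDegree_lt (show P.natDegree < 2 + 1 by omega)]
  simp only [zero_add, Nat.cast_ofNat, Nat.cast_zero, Nat.cast_one, one_add_one_eq_two, zero_mul,
    map_zero, mul_one, map_mul, map_ofNat]
  ring

lemma eval₂_add_of_natDegree_le_two (hP : P.natDegree ≤ 2) (x y : S) :
    eval₂ f (x + y) P
      = f (P.coeff 2) * y ^ 2 + eval₂ f x (derivative P) * y + eval₂ f x P := by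
  rw [eval₂_derivative_of_natDegree_le_two f hP]
  simp only [eval₂_of_natDegree_le_two f hP]
  ring

end Eval

lemma one_lt_q : 1 < 𝔮 := by exact_mod_cast Fintype.one_lt_card

lemma q_pos : 0 < 𝔮 := one_pos.trans one_lt_q

lemma isNonarchimedean_kabs : IsNonarchimedean (kabs Fq) := by
  intro x y
  by_cases hx : x = 0
  · simp [hx]
  by_cases hy : y = 0
  · simp [hy]
  by_cases hxy : x + y = 0
  · simp only [kabs, hxy, if_true]
    positivity
  have hord := HahnSeries.min_order_le_order_add hxy
  simp only [kabs, hx, hy, hxy, if_false, le_max_iff,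
    zpow_le_zpow_iff_right₀ (one_lt_q (Fq := Fq)), neg_le_neg_iff]
  exact min_le_iff.1 hord

/-- The absolute value `kabs` on `F_q((T⁻¹))`, bundled. -/
def absK (Fq : Type) [Field Fq] [Fintype Fq] : AbsoluteValue (K Fq) ℝ where
  toFun := kabs Fq
  map_mul' x y := by
    by_cases hx : x = 0
    · simp [kabs, hx]
    by_cases hy : y = 0
    · simp [kabs, hy]
    simp only [kabs, hx, hy, mul_ne_zero hx hy, if_false, HahnSeries.order_mul hx hy, neg_add]
    exact zpow_add₀ q_pos.ne' _ _
  nonneg' x := by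
    simp only [kabs]
    positivity
  eq_zero' x := by
    simp [kabs, zpow_ne_zero]
  add_le' x y := by
    refine (isNonarchimedean_kabs x y).trans (max_le_add_of_nonneg ?_ ?_) <;>
    · simp only [kabs]
      positivity

lemma kabs_mul (x y : K Fq) : kabs Fq (x * y) = kabs Fq x * kabs Fq y := (absK Fq).map_mul x y

lemma kabs_neg (x : K Fq) : kabs Fq (-x) = kabs Fq x := (absK Fq).map_neg x

lemma kabs_zero : kabs Fq 0 = 0 := (absK Fq).map_zero

lemma kabs_nonneg (x : K Fq) : 0 ≤ kabs Fq x := (absK Fq).nonneg x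

lemma kabs_pos {x : K Fq} : 0 < kabs Fq x ↔ x ≠ 0 := (absK Fq).pos_iff

lemma kabs_sub_le (x y : K Fq) : kabs Fq (x - y) ≤ max (kabs Fq x) (kabs Fq y) := by
  rw [sub_eq_add_neg, ← kabs_neg y]
  exact isNonarchimedean_kabs x (-y)

lemma kabs_add_eq_left {x y : K Fq} (h : kabs Fq y < kabs Fq x) :
    kabs Fq (x + y) = kabs Fq x :=
  IsNonarchimedean.add_eq_left_of_lt (f := absK Fq) isNonarchimedean_kabs h

section Extension

variable {v : L Fq → ℝ}

/-- An extension `v` of `kabs` to the algebraic closure, bundled as an absolute value. -/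
def IsAbsExt.toAbsoluteValue (hv : IsAbsExt Fq v) : AbsoluteValue (L Fq) ℝ where
  toFun := v
  map_mul' := hv.map_mul
  nonneg' := hv.nonneg
  eq_zero' := hv.eq_zero_iff
  add_le' x y := (hv.add_le x y).trans (max_le_add_of_nonneg (hv.nonneg x) (hv.nonneg y))

lemma IsAbsExt.isNonarchimedean (hv : IsAbsExt Fq v) : IsNonarchimedean hv.toAbsoluteValue :=
  hv.add_le

lemma IsAbsExt.apply_toL (hv : IsAbsExt Fq v) (x : K Fq) :
    hv.toAbsoluteValue (toL Fq x) = kabs Fq x := hv.extends_kabs x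

end Extension

section Height

lemma polyToK_coeff (f : F[X]) (z : ℤ) :
    (polyToK F f).coeff z = if z ≤ 0 then f.coeff (-z).toNat else 0 := by
  induction f using Polynomial.induction_on' with
  | add f g hf hg =>
    rw [map_add, HahnSeries.coeff_add, hf, hg]
    split_ifs <;> simp
  | monomial n x =>
    have hmon : polyToK F (monomial n x) = HahnSeries.single (-(n : ℤ)) x := by
      simp [polyToK, TT, eval₂_monomial, HahnSeries.single_pow, HahnSeries.C_apply]
    rw [hmon, HahnSeries.coeff_single, coeff_monomial]
    split_ifs <;> first | rfl | omega

lemma polyToK_injective : Function.Injective (polyToK F) := by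
  intro f g h
  ext n
  simpa [polyToK_coeff] using congrArg (fun x : K F => x.coeff (-(n : ℤ))) h

lemma polyToK_ne_zero {f : F[X]} : polyToK F f ≠ 0 ↔ f ≠ 0 :=
  map_ne_zero_iff _ polyToK_injective

lemma order_polyToK {f : F[X]} (hf : f ≠ 0) : (polyToK F f).order = -(f.natDegree : ℤ) := by
  refine le_antisymm (HahnSeries.order_le_of_coeff_ne_zero ?_) ?_
  · simpa [polyToK_coeff] using hf
  · by_contra! hlt
    have hcoeff := HahnSeries.coeff_order_eq_zero.not.2 (polyToK_ne_zero.2 hf)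
    rw [polyToK_coeff, if_pos (by omega)] at hcoeff
    exact hcoeff (coeff_eq_zero_of_natDegree_lt (by omega))

lemma kabs_polyToK {f : Fq[X]} (hf : f ≠ 0) :
    kabs Fq (polyToK Fq f) = 𝔮 ^ (f.natDegree : ℝ) := by
  rw [kabs, if_neg (polyToK_ne_zero.2 hf), order_polyToK hf, neg_neg, zpow_natCast,
    Real.rpow_natCast]

lemma one_le_kabs_polyToK {f : Fq[X]} (hf : f ≠ 0) : 1 ≤ kabs Fq (polyToK Fq f) := by
  rw [kabs_polyToK hf]
  exact Real.one_le_rpow one_lt_q.le (Nat.cast_nonneg _)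

lemma kabs_polyToK_le_rpow {f : Fq[X]} {t : ℝ} :
    kabs Fq (polyToK Fq f) ≤ 𝔮 ^ t ↔ f = 0 ∨ (f.natDegree : ℝ) ≤ t := by
  by_cases hf : f = 0
  · simp [hf, kabs_zero, Real.rpow_nonneg]
  · rw [kabs_polyToK hf, Real.rpow_le_rpow_left_iff one_lt_q]
    simp [hf]

variable {P : Fq[X][X]}

lemma bddAbove_kabs_coeff (P : Fq[X][X]) :
    BddAbove (Set.range fun i => kabs Fq (polyToK Fq (P.coeff i))) := by
  refine (((Set.finite_le_nat P.natDegree).image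
    fun i => kabs Fq (polyToK Fq (P.coeff i))).union (Set.finite_singleton 0)).bddAbove.mono ?_
  rintro _ ⟨i, rfl⟩
  rcases le_or_gt i P.natDegree with hi | hi
  · exact Or.inl ⟨i, hi, rfl⟩
  · exact Or.inr (by simp [coeff_eq_zero_of_natDegree_lt hi, kabs_zero])

lemma kabs_coeff_le_Hpoly (P : Fq[X][X]) (i : ℕ) :
    kabs Fq (polyToK Fq (P.coeff i)) ≤ Hpoly Fq P :=
  le_ciSup (bddAbove_kabs_coeff P) i

lemma one_le_Hpoly (hP : P ≠ 0) : 1 ≤ Hpoly Fq P :=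
  (one_le_kabs_polyToK (leadingCoeff_ne_zero.2 hP)).trans (kabs_coeff_le_Hpoly P _)

lemma exists_Hpoly_eq_rpow (hP : P ≠ 0) : ∃ t : ℝ, 0 ≤ t ∧ Hpoly Fq P = 𝔮 ^ t :=
  ⟨Real.logb 𝔮 (Hpoly Fq P), Real.logb_nonneg one_lt_q (one_le_Hpoly hP),
    (Real.rpow_logb q_pos one_lt_q.ne' (one_pos.trans_le (one_le_Hpoly hP))).symm⟩

lemma Hpoly_le_of_natDegree_le_two {M : ℝ} (hP : P.natDegree ≤ 2)
    (h₀ : kabs Fq (polyToK Fq (P.coeff 0)) ≤ M) (h₁ : kabs Fq (polyToK Fq (P.coeff 1)) ≤ M)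
    (h₂ : kabs Fq (polyToK Fq (P.coeff 2)) ≤ M) : Hpoly Fq P ≤ M := by
  refine ciSup_le fun i => ?_
  match i with
  | 0 => exact h₀
  | 1 => exact h₁
  | 2 => exact h₂
  | n + 3 =>
    rw [coeff_eq_zero_of_natDegree_lt (by omega), map_zero, kabs_zero]
    exact (kabs_nonneg _).trans h₂

lemma finite_setOf_natDegree_le_coeff_mem {R : Type*} [Semiring R] {S : Set R} (hS : S.Finite)
    (n : ℕ) : {P : R[X] | P.natDegree ≤ n ∧ ∀ i, P.coeff i ∈ S}.Finite := by
  have hpi : (Set.univ.pi fun _ : Fin (n + 1) => S).Finite := Set.Finite.pi fun _ => hS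
  refine Set.Finite.of_finite_image (f := fun P (i : Fin (n + 1)) => P.coeff i)
    (hpi.subset ?_) ?_
  · rintro _ ⟨P, hP, rfl⟩ i -
    exact hP.2 i
  · intro P hP Q hQ h
    ext i
    rcases le_or_gt i n with hi | hi
    · exact congrFun h ⟨i, Nat.lt_succ_of_le hi⟩
    · rw [coeff_eq_zero_of_natDegree_lt (hP.1.trans_lt hi),
        coeff_eq_zero_of_natDegree_lt (hQ.1.trans_lt hi)]

lemma finite_setOf_Hpoly_le (n : ℕ) (M : ℝ) :
    {P : Fq[X][X] | P.natDegree ≤ n ∧ Hpoly Fq P ≤ M}.Finite := by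
  obtain ⟨N, hN⟩ := pow_unbounded_of_one_lt M (one_lt_q (Fq := Fq))
  have hcoeff : {f : Fq[X] | f.natDegree ≤ N}.Finite :=
    (finite_setOf_natDegree_le_coeff_mem (Set.toFinite Set.univ) N).subset
      fun f hf => ⟨hf, fun _ => Set.mem_univ _⟩
  refine (finite_setOf_natDegree_le_coeff_mem hcoeff n).subset fun P hP => ⟨hP.1, fun i => ?_⟩
  have hle := ((kabs_coeff_le_Hpoly P i).trans hP.2).trans hN.le
  rw [← Real.rpow_natCast, kabs_polyToK_le_rpow] at hle
  rcases hle with h | h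
  · simp [h]
  · exact_mod_cast h

end Height

section Rpow

variable {x y : ℝ}

lemma q_rpow_pos (x : ℝ) : 0 < 𝔮 ^ x := Real.rpow_pos_of_pos q_pos x

lemma q_rpow_mul (x y : ℝ) : 𝔮 ^ x * 𝔮 ^ y = 𝔮 ^ (x + y) := (Real.rpow_add q_pos x y).symm

lemma q_rpow_rpow (x y : ℝ) : (𝔮 ^ x) ^ y = 𝔮 ^ (x * y) := (Real.rpow_mul q_pos.le x y).symm

lemma q_rpow_le : 𝔮 ^ x ≤ 𝔮 ^ y ↔ x ≤ y := Real.rpow_le_rpow_left_iff one_lt_q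

lemma q_rpow_lt : 𝔮 ^ x < 𝔮 ^ y ↔ x < y := Real.rpow_lt_rpow_left_iff one_lt_q

end Rpow

section ContinuantSeq

variable {R : Type*} [CommRing R]

/-- The three-term recurrence satisfied by the numerators and by the denominators of the
convergents of a continued fraction with partial quotients `a`. -/
def IsContinuantSeq (a x : ℕ → R) : Prop := ∀ n, x (n + 2) = a (n + 1) * x (n + 1) + x n

/-- The determinant of the terms `r`, `r + 1` of a sequence against the terms `r + s`,
`r + s + 1`. It measures the failure of the sequence to be periodic up to a factor. -/
def crossDet (x : ℕ → R) (r s : ℕ) : R := x r * x (r + s + 1) - x (r + 1) * x (r + s)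

variable {a x y : ℕ → R}

lemma IsContinuantSeq.mul_sub_mul (hx : IsContinuantSeq a x) (hy : IsContinuantSeq a y)
    (u v : R) : IsContinuantSeq a fun n => x n * u - y n * v := fun n => by
  simp only [hx n, hy n]
  ring

lemma IsContinuantSeq.crossDet_succ (hx : IsContinuantSeq a x) (r s : ℕ) :
    crossDet x (r + 1) s
      = (a (r + s + 1) - a (r + 1)) * (x (r + 1) * x (r + s + 1)) - crossDet x r s := by
  have hr := hx r
  have hrs := hx (r + s)
  simp only [crossDet, show r + 1 + s = r + s + 1 by ring,
    show r + 1 + 1 = r + 2 by ring, hr, hrs]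
  ring

lemma IsContinuantSeq.crossDet_add (hx : IsContinuantSeq a x) {r s k : ℕ}
    (hper : ∀ i, r < i → i ≤ r + k → a (i + s) = a i) :
    crossDet x (r + k) s = (-1) ^ k * crossDet x r s := by
  induction k with
  | zero => simp
  | succ k ih =>
    have hletter : a (r + k + s + 1) = a (r + k + 1) := by
      rw [show r + k + s + 1 = r + k + 1 + s by ring]
      exact hper _ (by omega) (by omega)
    rw [← add_assoc, hx.crossDet_succ, hletter, ih fun i hi hik => hper i hi (by omega)]
    ring

lemma isContinuantSeq_qSeq (a : ℕ → F[X]) : IsContinuantSeq a (qSeq F a) := fun _ => rfl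

lemma isContinuantSeq_pSeq (a : ℕ → F[X]) : IsContinuantSeq a (pSeq F a) := fun _ => rfl

lemma qSeq_mul_pSeq_sub (a : ℕ → F[X]) (n : ℕ) :
    qSeq F a (n + 1) * pSeq F a n - pSeq F a (n + 1) * qSeq F a n = (-1) ^ n := by
  induction n with
  | zero => simp [qSeq, pSeq]
  | succ n ih =>
    rw [isContinuantSeq_qSeq, isContinuantSeq_pSeq, pow_succ, ← ih]
    ring

lemma isCoprime_qSeq_succ (a : ℕ → F[X]) (n : ℕ) :
    IsCoprime (qSeq F a (n + 1)) (qSeq F a n) := by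
  refine ⟨(-1) ^ n * pSeq F a n, -((-1) ^ n * pSeq F a (n + 1)), ?_⟩
  have hsq : ((-1 : F[X]) ^ n) ^ 2 = 1 := by rw [← pow_mul, mul_comm, pow_mul]; simp
  linear_combination (-1) ^ n * qSeq_mul_pSeq_sub a n + hsq

lemma IsContinuantSeq.eq_mul_qSeq {a a' x : ℕ → F[X]} (hx : IsContinuantSeq a x) {m s : ℕ}
    (hm : x m = 0) (ha : ∀ i, 1 ≤ i → i < s → a (m + i) = a' i) :
    ∀ i ≤ s, x (m + i) = x (m + 1) * qSeq F a' i
  | 0, _ => by simp [hm, qSeq]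
  | 1, _ => by simp [qSeq]
  | i + 2, hi => by
    rw [← add_assoc, hx, add_assoc m i 1, ha (i + 1) (by omega) (by omega),
      hx.eq_mul_qSeq hm ha (i + 1) (by omega), hx.eq_mul_qSeq hm ha i (by omega), qSeq]
    ring

end ContinuantSeq

section Denominators

/-- The degree of the denominator of the `n`-th convergent of `[a 0; a 1, a 2, …]`. -/
def denomDeg (a : ℕ → F[X]) (n : ℕ) : ℕ := (qSeq F a (n + 1)).natDegree

variable {a : ℕ → F[X]}

lemma denomDeg_zero : denomDeg a 0 = 0 := by simp [denomDeg, qSeq]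

lemma degree_lt_degree_mul {f g : F[X]} (hf : 1 ≤ f.natDegree) (hg : g ≠ 0) :
    g.degree < (f * g).degree := by
  have hf0 : f ≠ 0 := ne_zero_of_natDegree_gt hf
  rw [degree_eq_natDegree hg, degree_eq_natDegree (mul_ne_zero hf0 hg), natDegree_mul hf0 hg]
  norm_cast
  omega

lemma degree_qSeq_lt (ha : ∀ n, 1 ≤ n → 1 ≤ (a n).natDegree) (n : ℕ) :
    (qSeq F a n).degree < (qSeq F a (n + 1)).degree := by
  induction n with
  | zero => simp [qSeq]
  | succ n ih =>
    have hlt := degree_lt_degree_mul (ha (n + 1) (by omega)) (ne_zero_of_degree_gt ih)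
    rwa [isContinuantSeq_qSeq, degree_add_eq_left_of_degree_lt (ih.trans hlt)]

lemma qSeq_succ_ne_zero (ha : ∀ n, 1 ≤ n → 1 ≤ (a n).natDegree) (n : ℕ) :
    qSeq F a (n + 1) ≠ 0 :=
  ne_zero_of_degree_gt (degree_qSeq_lt ha n)

lemma denomDeg_succ (ha : ∀ n, 1 ≤ n → 1 ≤ (a n).natDegree) (n : ℕ) :
    denomDeg a (n + 1) = (a (n + 1)).natDegree + denomDeg a n := by
  have hpos := ha (n + 1) (by omega)
  have hne := qSeq_succ_ne_zero ha n
  rw [denomDeg, isContinuantSeq_qSeq, natDegree_add_eq_left_of_degree_lt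
    ((degree_qSeq_lt ha n).trans (degree_lt_degree_mul hpos hne)),
    natDegree_mul (ne_zero_of_natDegree_gt hpos) hne, denomDeg]

lemma strictMono_denomDeg (ha : ∀ n, 1 ≤ n → 1 ≤ (a n).natDegree) : StrictMono (denomDeg a) :=
  strictMono_nat_of_lt_succ fun n => by
    have hpos := ha (n + 1) (by omega)
    rw [denomDeg_succ ha]
    omega

lemma exists_denomDeg_le_lt (ha : ∀ n, 1 ≤ n → 1 ≤ (a n).natDegree) (m : ℕ) :
    ∃ n, denomDeg a n ≤ m ∧ m < denomDeg a (n + 1) := by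
  have hex : ∃ n, m < denomDeg a n := ⟨m + 1, (strictMono_denomDeg ha).le_apply⟩
  obtain ⟨n, hn⟩ : ∃ n, Nat.find hex = n + 1 := Nat.exists_eq_succ_of_ne_zero fun h => by
    simpa [h, denomDeg_zero] using Nat.find_spec hex
  exact ⟨n, not_lt.1 (Nat.find_min hex (by omega)), hn ▸ Nat.find_spec hex⟩

lemma denomDeg_cast_lt (ha : ∀ n, 1 ≤ n → 1 ≤ (a n).natDegree) {m n : ℕ} (h : m < n) :
    (denomDeg a m : ℝ) < denomDeg a n := by
  exact_mod_cast strictMono_denomDeg ha h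

end Denominators

section LinearForms

variable {a : ℕ → Fq[X]} {ξ : K Fq}

/-- The linear form `q_{n-1} ξ - p_{n-1}`; the index is that of `pSeq` and `qSeq`. -/
def linForm (a : ℕ → F[X]) (ξ : K F) (n : ℕ) : K F :=
  polyToK F (qSeq F a n) * ξ - polyToK F (pSeq F a n)

lemma isContinuantSeq_linForm (a : ℕ → F[X]) (ξ : K F) :
    IsContinuantSeq (fun n => polyToK F (a n)) (linForm a ξ) := fun n => by
  simp only [linForm, isContinuantSeq_qSeq a n, isContinuantSeq_pSeq a n, map_add, map_mul]
  ring

lemma kabs_qSeq_succ (ha : ∀ n, 1 ≤ n → 1 ≤ (a n).natDegree) (n : ℕ) :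
    kabs Fq (polyToK Fq (qSeq Fq a (n + 1))) = 𝔮 ^ (denomDeg a n : ℝ) :=
  kabs_polyToK (qSeq_succ_ne_zero ha n)

lemma kabs_qSeq_lt (ha : ∀ n, 1 ≤ n → 1 ≤ (a n).natDegree) (n : ℕ) :
    kabs Fq (polyToK Fq (qSeq Fq a n)) < 𝔮 ^ (denomDeg a n : ℝ) := by
  cases n with
  | zero =>
    rw [qSeq, map_zero, kabs_zero]
    exact q_rpow_pos _
  | succ n =>
    rw [kabs_qSeq_succ ha, q_rpow_lt]
    exact_mod_cast strictMono_denomDeg ha n.lt_succ_self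

lemma kabs_linForm (hξ : IsCFOf Fq ξ a) (n : ℕ) :
    kabs Fq (linForm a ξ n) = 𝔮 ^ (-(denomDeg a n : ℝ)) := by
  cases n with
  | zero =>
    have hone : kabs Fq 1 = 1 := (absK Fq).map_one
    simp [linForm, qSeq, pSeq, denomDeg_zero, kabs_neg, hone]
  | succ n =>
    have hq := polyToK_ne_zero.2 (qSeq_succ_ne_zero hξ.1 n)
    have hfactor : linForm a ξ (n + 1) = polyToK Fq (qSeq Fq a (n + 1)) *
        (ξ - polyToK Fq (pSeq Fq a (n + 1)) / polyToK Fq (qSeq Fq a (n + 1))) := by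
      rw [linForm]
      field_simp
    rw [hfactor, kabs_mul, hξ.2, mul_inv, mul_inv_cancel_left₀ (kabs_pos.2 hq).ne',
      kabs_qSeq_succ hξ.1, Real.rpow_neg q_pos.le]

/-- `ξ` is badly approximable: `|s ξ - u| ≥ q^{-D} |s|⁻¹` for all `s ≠ 0` and `u` in `F_q[T]`. -/
def IsBadlyApproximable (ξ : K Fq) (D : ℝ) : Prop :=
  ∀ s u : Fq[X], s ≠ 0 → 𝔮 ^ (-(D + s.natDegree)) ≤ kabs Fq (polyToK Fq s * ξ - polyToK Fq u)

lemma rpow_neg_denomDeg_le_kabs (hξ : IsCFOf Fq ξ a) {s u : Fq[X]} {n : ℕ}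
    (hn : s.natDegree < denomDeg a (n + 1))
    (hne : u * qSeq Fq a (n + 1) - s * pSeq Fq a (n + 1) ≠ 0) :
    𝔮 ^ (-(denomDeg a n : ℝ)) ≤ kabs Fq (polyToK Fq s * ξ - polyToK Fq u) := by
  have hs : kabs Fq (polyToK Fq s * linForm a ξ (n + 1)) < 1 := by
    have hle := mul_le_mul_of_nonneg_right
      (kabs_polyToK_le_rpow (f := s).2 (Or.inr le_rfl)) (kabs_nonneg (linForm a ξ (n + 1)))
    rw [kabs_mul]
    refine hle.trans_lt ?_
    rw [kabs_linForm hξ, q_rpow_mul]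
    refine Real.rpow_lt_one_of_one_lt_of_neg one_lt_q ?_
    rw [← sub_eq_add_neg, sub_neg]
    exact_mod_cast hn
  have hsplit : polyToK Fq (u * qSeq Fq a (n + 1) - s * pSeq Fq a (n + 1)) =
      polyToK Fq s * linForm a ξ (n + 1) -
        polyToK Fq (qSeq Fq a (n + 1)) * (polyToK Fq s * ξ - polyToK Fq u) := by
    simp only [linForm, map_sub, map_mul]
    ring
  have hone := (one_le_kabs_polyToK hne).trans ((congrArg _ hsplit).trans_le (kabs_sub_le _ _))
  have hlarge := (le_max_iff.1 hone).resolve_left hs.not_ge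
  rwa [kabs_mul, kabs_qSeq_succ hξ.1, ← inv_le_iff_one_le_mul₀' (q_rpow_pos _),
    ← Real.rpow_neg q_pos.le] at hlarge

lemma IsCFOf.isBadlyApproximable (hξ : IsCFOf Fq ξ a) {D : ℕ}
    (hD : ∀ n, 1 ≤ n → (a n).natDegree ≤ D) : IsBadlyApproximable ξ D := by
  intro s u hs
  obtain ⟨n, hle, hlt⟩ := exists_denomDeg_le_lt hξ.1 s.natDegree
  have hstep : denomDeg a (n + 1) ≤ D + s.natDegree := by
    rw [denomDeg_succ hξ.1]
    exact Nat.add_le_add (hD _ (by omega)) hle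
  have hmono : ∀ k ≤ n + 1, 𝔮 ^ (-(D + s.natDegree : ℝ)) ≤ 𝔮 ^ (-(denomDeg a k : ℝ)) :=
    fun k hk => q_rpow_le.2 <| neg_le_neg <| by
      exact_mod_cast ((strictMono_denomDeg hξ.1).monotone hk).trans hstep
  by_cases hzero : u * qSeq Fq a (n + 1) - s * pSeq Fq a (n + 1) = 0
  · refine (hmono (n + 1) le_rfl).trans (rpow_neg_denomDeg_le_kabs hξ
      (hlt.trans (strictMono_denomDeg hξ.1 (n + 1).lt_succ_self)) fun hzero' => hs ?_)
    have hunit : s * (-1) ^ (n + 1) = 0 := by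
      linear_combination -s * qSeq_mul_pSeq_sub a (n + 1) - qSeq Fq a (n + 2) * hzero
        + qSeq Fq a (n + 1) * hzero'
    simpa using hunit
  · exact (hmono n n.le_succ).trans (rpow_neg_denomDeg_le_kabs hξ hlt hzero)

end LinearForms

section BinForm

/-- The binary quadratic form `P₂ x² + P₁ x y + P₀ y²` attached to a polynomial of degree at
most two. -/
def binForm {R : Type*} [CommRing R] (P : R[X]) (x y : R) : R :=
  P.coeff 2 * x ^ 2 + P.coeff 1 * (x * y) + P.coeff 0 * y ^ 2

variable {R : Type*} [CommRing R]

lemma dvd_binForm {P : R[X]} {g : R} (h : C g ∣ P) (x y : R) : g ∣ binForm P x y := by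
  rw [C_dvd_iff_dvd_coeff] at h
  exact dvd_add (dvd_add ((h 2).mul_right _) ((h 1).mul_right _)) ((h 0).mul_right _)

lemma map_binForm {S : Type*} [CommRing S] (f : R →+* S) {P : R[X]} (hP : P.natDegree ≤ 2) {x y : R}
    {t : S} (ht : f x = f y * t) : f (binForm P x y) = f y ^ 2 * eval₂ f t P := by
  simp only [binForm, eval₂_of_natDegree_le_two f hP, map_add, map_mul, map_pow, ht]
  ring

end BinForm

section PeriodQuad

/-- The linear polynomial `q_{n-1} X - p_{n-1}`; the index is that of `pSeq` and `qSeq`. -/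
def convPoly (a : ℕ → F[X]) (n : ℕ) : F[X][X] := C (qSeq F a n) * X - C (pSeq F a n)

/-- The quadratic polynomial vanishing at the continued fraction with preperiod
`a 0, …, a r` and period `a (r + 1), …, a (r + s)`. -/
def periodQuad (a : ℕ → F[X]) (r s : ℕ) : F[X][X] := crossDet (convPoly a) r s

variable {a : ℕ → F[X]} {r s : ℕ}

lemma isContinuantSeq_convPoly (a : ℕ → F[X]) :
    IsContinuantSeq (fun n => C (a n)) (convPoly a) := fun n => by
  simp only [convPoly, isContinuantSeq_qSeq a n, isContinuantSeq_pSeq a n, C_add, C_mul]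
  ring

lemma natDegree_periodQuad_le (a : ℕ → F[X]) (r s : ℕ) : (periodQuad a r s).natDegree ≤ 2 := by
  have hlin : ∀ n, (convPoly a n).natDegree ≤ 1 := fun n =>
    natDegree_sub_C.trans_le ((natDegree_C_mul_le _ _).trans natDegree_X_le)
  have hmul : ∀ m n, (convPoly a m * convPoly a n).natDegree ≤ 1 + 1 := fun m n =>
    natDegree_mul_le_of_le (hlin m) (hlin n)
  exact natDegree_sub_le_of_le (hmul _ _) (hmul _ _)

lemma periodQuad_eq (a : ℕ → F[X]) (r s : ℕ) :
    periodQuad a r s = C (crossDet (qSeq F a) r s) * X ^ 2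
      + C (qSeq F a (r + 1) * pSeq F a (r + s) + pSeq F a (r + 1) * qSeq F a (r + s)
        - (qSeq F a r * pSeq F a (r + s + 1) + pSeq F a r * qSeq F a (r + s + 1))) * X
      + C (crossDet (pSeq F a) r s) := by
  simp only [periodQuad, crossDet, convPoly, C_sub, C_mul, C_add]
  ring

lemma coeff_two_periodQuad (a : ℕ → F[X]) (r s : ℕ) :
    (periodQuad a r s).coeff 2 = crossDet (qSeq F a) r s := by
  simp [periodQuad_eq]

lemma binForm_periodQuad (a : ℕ → F[X]) (r s : ℕ) (x y : F[X]) :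
    binForm (periodQuad a r s) x y
      = crossDet (fun n => qSeq F a n * x - pSeq F a n * y) r s := by
  rw [binForm, periodQuad_eq]
  simp [coeff_X, coeff_C, crossDet, -map_sub, -map_mul, -map_add]
  ring

lemma evalK_convPoly (a : ℕ → F[X]) (ξ : K F) (n : ℕ) :
    evalK F (convPoly a n) ξ = linForm a ξ n := by
  simp [evalK, convPoly, linForm]

lemma evalK_periodQuad (a : ℕ → F[X]) (r s : ℕ) (ξ : K F) :
    evalK F (periodQuad a r s) ξ = crossDet (linForm a ξ) r s := by
  simp only [crossDet, ← evalK_convPoly]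
  simp only [evalK, periodQuad, crossDet, eval₂_sub, eval₂_mul]

lemma evalK_derivative_periodQuad (a : ℕ → F[X]) (r s : ℕ) (ξ : K F) :
    evalK F (derivative (periodQuad a r s)) ξ =
      polyToK F (qSeq F a (r + s + 1)) * linForm a ξ r +
      (polyToK F (qSeq F a r) * linForm a ξ (r + s + 1)
        - (polyToK F (qSeq F a (r + 1)) * linForm a ξ (r + s)
          + polyToK F (qSeq F a (r + s)) * linForm a ξ (r + 1))) := by
  simp only [← evalK_convPoly]
  simp [evalK, periodQuad, crossDet, convPoly]
  ring

lemma dvd_periodQuad_add {Q : F[X][X]} {k : ℕ} (hper : ∀ i, r < i → i ≤ r + k → a (i + s) = a i)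
    (hQ : Q ∣ periodQuad a r s) : Q ∣ periodQuad a (r + k) s := by
  rw [periodQuad, (isContinuantSeq_convPoly a).crossDet_add fun i hi hik => by rw [hper i hi hik]]
  exact hQ.mul_left _

lemma isUnit_neg_one_pow {R : Type*} [Ring R] (n : ℕ) : IsUnit ((-1 : R) ^ n) :=
  isUnit_one.neg.pow n

/-- The `2 × 2` minors `q_{n-1} p_{k-1} - p_{n-1} q_{k-1}`: the solution of the recurrence of the
continuants that vanishes at index `k`. -/
def minorSeq (a : ℕ → F[X]) (k n : ℕ) : F[X] :=
  qSeq F a n * pSeq F a k - pSeq F a n * qSeq F a k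

lemma isContinuantSeq_minorSeq (a : ℕ → F[X]) (k : ℕ) : IsContinuantSeq a (minorSeq a k) :=
  (isContinuantSeq_qSeq a).mul_sub_mul (isContinuantSeq_pSeq a) _ _

lemma minorSeq_self (a : ℕ → F[X]) (k : ℕ) : minorSeq a k k = 0 := by
  rw [minorSeq]
  ring

lemma minorSeq_succ (a : ℕ → F[X]) (k : ℕ) : minorSeq a k (k + 1) = (-1) ^ k :=
  qSeq_mul_pSeq_sub a k

lemma minorSeq_add {b : F[X]} {k : ℕ} (hb : ∀ i, 1 ≤ i → i < s → a (k + i) = b) {i : ℕ}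
    (hi : i ≤ s) : minorSeq a k (k + i) = (-1) ^ k * qSeq F (fun _ => b) i := by
  rw [(isContinuantSeq_minorSeq a k).eq_mul_qSeq (minorSeq_self a k) hb i hi, minorSeq_succ]

lemma dvd_crossDet_minorSeq {g : F[X]} (hg : C g ∣ periodQuad a r s) (k : ℕ) :
    g ∣ crossDet (minorSeq a k) r s := by
  have h := dvd_binForm hg (pSeq F a k) (qSeq F a k)
  rwa [binForm_periodQuad] at h

lemma dvd_qSeq_of_C_dvd_periodQuad {b g : F[X]} (hb : ∀ i, 1 ≤ i → i < s → a (r + i) = b)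
    (hg : C g ∣ periodQuad a r s) : g ∣ qSeq F (fun _ => b) s := by
  have h := dvd_crossDet_minorSeq hg r
  rw [crossDet, minorSeq_self, zero_mul, zero_sub, dvd_neg, minorSeq_succ,
    minorSeq_add hb le_rfl] at h
  exact (isUnit_neg_one_pow r).dvd_mul_left.1 ((isUnit_neg_one_pow r).dvd_mul_left.1 h)

lemma dvd_mul_qSeq_add_of_C_dvd_periodQuad {b g : F[X]} {t : ℕ}
    (hb : ∀ i, 1 ≤ i → i < t + 2 → a (r + i) = b) (hg : C g ∣ periodQuad a r (t + 2)) :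
    g ∣ a (r + (t + 2)) * qSeq F (fun _ => b) (t + 1) + qSeq F (fun _ => b) t := by
  have h := dvd_crossDet_minorSeq hg (r + 1)
  have hZ := isContinuantSeq_minorSeq a (r + 1)
  have hb' : ∀ i, 1 ≤ i → i < t + 1 → a (r + 1 + i) = b := fun i hi hit => by
    rw [add_assoc]
    exact hb _ (by omega) (by omega)
  have hfirst : minorSeq a (r + 1) r = minorSeq a (r + 1) (r + 2) := by
    rw [hZ, minorSeq_self, mul_zero, zero_add]
  have hlast : minorSeq a (r + 1) (r + (t + 2) + 1) = a (r + (t + 2)) *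
      minorSeq a (r + 1) (r + 1 + (t + 1)) + minorSeq a (r + 1) (r + 1 + t) := by
    rw [show r + (t + 2) + 1 = r + 1 + t + 2 by ring, hZ,
      show r + 1 + t + 1 = r + (t + 2) by ring, show r + 1 + (t + 1) = r + (t + 2) by ring]
  rw [crossDet, minorSeq_self, zero_mul, sub_zero, hfirst, minorSeq_succ, hlast,
    minorSeq_add hb' le_rfl, minorSeq_add hb' t.le_succ, mul_left_comm, ← mul_add] at h
  exact (isUnit_neg_one_pow _).dvd_mul_left.1 ((isUnit_neg_one_pow _).dvd_mul_left.1 h)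

lemma dvd_sub_of_C_dvd_periodQuad {b g : F[X]} (hs : 2 ≤ s)
    (hb : ∀ i, 1 ≤ i → i < s → a (r + i) = b) (hg : C g ∣ periodQuad a r s) :
    g ∣ b - a (r + s) := by
  obtain ⟨t, rfl⟩ := Nat.exists_eq_add_of_le' hs
  have hU := dvd_qSeq_of_C_dvd_periodQuad hb hg
  have hU' := dvd_mul_qSeq_add_of_C_dvd_periodQuad hb hg
  have hcop : IsCoprime g (qSeq F (fun _ => b) (t + 1)) :=
    (isCoprime_qSeq_succ _ (t + 1)).of_isCoprime_of_dvd_left hU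
  refine hcop.dvd_of_dvd_mul_right ?_
  convert dvd_sub hU hU' using 1
  rw [isContinuantSeq_qSeq]
  ring

end PeriodQuad

section Size

/-- The sizes that control the approximation of `ξ` by the roots of `P`, of degree at most two:
`|P₂| = q^A`, `|P'(ξ)| = q^B` and `|P(ξ)| = q^C`. -/
structure QuadSize (ξ : K Fq) (P : Fq[X][X]) (A B C : ℝ) : Prop where
  natDegree_le : P.natDegree ≤ 2
  lead : kabs Fq (polyToK Fq (P.coeff 2)) = 𝔮 ^ A
  deriv : kabs Fq (evalK Fq (derivative P) ξ) = 𝔮 ^ B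
  value : kabs Fq (evalK Fq P ξ) = 𝔮 ^ C

variable {a : ℕ → Fq[X]} {ξ : K Fq} {r s : ℕ}

lemma kabs_crossDet_qSeq (ha : ∀ n, 1 ≤ n → 1 ≤ (a n).natDegree)
    (hrs : a (r + s + 1) ≠ a (r + 1)) :
    kabs Fq (polyToK Fq (crossDet (qSeq Fq a) (r + 1) s))
      = 𝔮 ^ ((a (r + s + 1) - a (r + 1)).natDegree + denomDeg a r + denomDeg a (r + s) : ℝ) := by
  have hmain : kabs Fq (polyToK Fq ((a (r + s + 1) - a (r + 1)) *
      (qSeq Fq a (r + 1) * qSeq Fq a (r + s + 1)))) = 𝔮 ^ ((a (r + s + 1) - a (r + 1)).natDegree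
        + denomDeg a r + denomDeg a (r + s) : ℝ) := by
    rw [map_mul, map_mul, kabs_mul, kabs_mul, kabs_qSeq_succ ha, kabs_qSeq_succ ha,
      kabs_polyToK (sub_ne_zero.2 hrs), ← mul_assoc, q_rpow_mul, q_rpow_mul]
  have hrest : kabs Fq (polyToK Fq (crossDet (qSeq Fq a) r s))
      < 𝔮 ^ (denomDeg a r + denomDeg a (r + s) : ℝ) := by
    rw [crossDet, map_sub, map_mul, map_mul]
    refine (kabs_sub_le _ _).trans_lt (max_lt ?_ ?_) <;>
      rw [kabs_mul, kabs_qSeq_succ ha, ← q_rpow_mul]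
    · exact mul_lt_mul_of_pos_right (kabs_qSeq_lt ha _) (q_rpow_pos _)
    · exact mul_lt_mul_of_pos_left (kabs_qSeq_lt ha _) (q_rpow_pos _)
  rw [(isContinuantSeq_qSeq a).crossDet_succ, sub_eq_add_neg, map_add, kabs_add_eq_left, hmain]
  rw [map_neg, kabs_neg, hmain]
  refine hrest.trans_le (q_rpow_le.2 ?_)
  linarith [Nat.cast_nonneg (α := ℝ) (a (r + s + 1) - a (r + 1)).natDegree]

lemma kabs_crossDet_linForm (hξ : IsCFOf Fq ξ a) (hrs : a (r + s + 1) ≠ a (r + 1)) :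
    kabs Fq (crossDet (linForm a ξ) r s) = 𝔮 ^ ((a (r + s + 1) - a (r + 1)).natDegree
      - denomDeg a (r + 1) - denomDeg a (r + s + 1) : ℝ) := by
  have hmain : kabs Fq ((polyToK Fq (a (r + s + 1)) - polyToK Fq (a (r + 1))) *
      (linForm a ξ (r + 1) * linForm a ξ (r + s + 1))) = 𝔮 ^ ((a (r + s + 1)
        - a (r + 1)).natDegree - denomDeg a (r + 1) - denomDeg a (r + s + 1) : ℝ) := by
    rw [← map_sub, kabs_mul, kabs_mul, kabs_linForm hξ, kabs_linForm hξ,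
      kabs_polyToK (sub_ne_zero.2 hrs), ← mul_assoc, q_rpow_mul, q_rpow_mul, ← sub_eq_add_neg,
      ← sub_eq_add_neg]
  have hrest : kabs Fq (crossDet (linForm a ξ) (r + 1) s)
      < 𝔮 ^ (-denomDeg a (r + 1) - denomDeg a (r + s + 1) : ℝ) := by
    have h₁ := denomDeg_cast_lt hξ.1 (show r + 1 < r + 1 + 1 by omega)
    have h₂ := denomDeg_cast_lt hξ.1 (show r + 1 + s < r + 1 + s + 1 by omega)
    refine (kabs_sub_le _ _).trans_lt (max_lt ?_ ?_) <;>
    · rw [kabs_mul, kabs_linForm hξ, kabs_linForm hξ, q_rpow_mul, q_rpow_lt,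
        show r + s + 1 = r + 1 + s by ring]
      linarith
  have hsplit : crossDet (linForm a ξ) r s =
      (polyToK Fq (a (r + s + 1)) - polyToK Fq (a (r + 1))) *
        (linForm a ξ (r + 1) * linForm a ξ (r + s + 1)) + -crossDet (linForm a ξ) (r + 1) s := by
    rw [(isContinuantSeq_linForm a ξ).crossDet_succ]
    ring
  rw [hsplit, kabs_add_eq_left, hmain]
  rw [kabs_neg, hmain]
  refine hrest.trans_le (q_rpow_le.2 ?_)
  linarith [Nat.cast_nonneg (α := ℝ) (a (r + s + 1) - a (r + 1)).natDegree]

lemma kabs_evalK_derivative_periodQuad (hξ : IsCFOf Fq ξ a) (hs : 0 < s) :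
    kabs Fq (evalK Fq (derivative (periodQuad a r s)) ξ)
      = 𝔮 ^ (denomDeg a (r + s) - denomDeg a r : ℝ) := by
  have ha := hξ.1
  have hlt : (denomDeg a r : ℝ) < denomDeg a (r + s) := denomDeg_cast_lt ha (by omega)
  have hlt_succ := fun n => denomDeg_cast_lt ha (Nat.lt_succ_self n)
  have hmain : kabs Fq (polyToK Fq (qSeq Fq a (r + s + 1)) * linForm a ξ r)
      = 𝔮 ^ (denomDeg a (r + s) - denomDeg a r : ℝ) := by
    rw [kabs_mul, kabs_qSeq_succ ha, kabs_linForm hξ, q_rpow_mul, ← sub_eq_add_neg]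
  have hsmall : ∀ m n : ℕ, (denomDeg a m - denomDeg a n : ℝ) ≤ denomDeg a (r + s) - denomDeg a r →
      kabs Fq (polyToK Fq (qSeq Fq a m) * linForm a ξ n)
        < 𝔮 ^ (denomDeg a (r + s) - denomDeg a r : ℝ) := fun m n hmn => by
    rw [kabs_mul, kabs_linForm hξ]
    refine (mul_lt_mul_of_pos_right (kabs_qSeq_lt ha m) (q_rpow_pos _)).trans_le ?_
    rwa [q_rpow_mul, q_rpow_le, ← sub_eq_add_neg]
  rw [evalK_derivative_periodQuad, kabs_add_eq_left, hmain]
  rw [hmain]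
  refine (kabs_sub_le _ _).trans_lt (max_lt (hsmall _ _ ?_)
    ((isNonarchimedean_kabs _ _).trans_lt (max_lt ?_ (hsmall _ _ ?_))))
  · linarith [hlt_succ (r + s)]
  · rw [kabs_mul, kabs_qSeq_succ ha, kabs_linForm hξ, q_rpow_mul, q_rpow_lt]
    linarith
  · linarith [hlt_succ r]

lemma quadSize_periodQuad (hξ : IsCFOf Fq ξ a) {k : ℕ} (hs : 0 < s)
    (hfirst : a (r + s + 1) ≠ a (r + 1))
    (hper : ∀ i, r + 1 < i → i ≤ r + 1 + k → a (i + s) = a i)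
    (hlast : a (r + 1 + k + s + 1) ≠ a (r + 1 + k + 1)) :
    QuadSize ξ (periodQuad a (r + 1) s)
      ((a (r + s + 1) - a (r + 1)).natDegree + denomDeg a r + denomDeg a (r + s))
      (denomDeg a (r + 1 + s) - denomDeg a (r + 1))
      ((a (r + 1 + k + s + 1) - a (r + 1 + k + 1)).natDegree - denomDeg a (r + 1 + k + 1)
        - denomDeg a (r + 1 + k + s + 1)) where
  natDegree_le := natDegree_periodQuad_le _ _ _
  lead := by rw [coeff_two_periodQuad, kabs_crossDet_qSeq hξ.1 hfirst]
  deriv := kabs_evalK_derivative_periodQuad hξ hs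
  value := by
    have hshift := (isContinuantSeq_linForm a ξ).crossDet_add
      (r := r + 1) (s := s) (k := k) fun i hi hik => by rw [hper i hi hik]
    have hsign : ∀ x : K Fq, kabs Fq ((-1) ^ k * x) = kabs Fq x := fun x => by
      rcases neg_one_pow_eq_or (K Fq) k with h | h <;> simp [h, kabs_neg]
    rw [evalK_periodQuad, ← hsign, ← hshift, kabs_crossDet_linForm hξ hlast]

end Size

section RationalRoots

/-- `P`, viewed as a quadratic polynomial, has no root `u / s` in the field of fractions. -/
def HasNoRatRoot (P : F[X][X]) : Prop := ∀ u s : F[X], s ≠ 0 → binForm P u s ≠ 0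

lemma binForm_mul_mul {R : Type*} [CommRing R] (P : R[X]) (g x y : R) :
    binForm P (g * x) (g * y) = g ^ 2 * binForm P x y := by
  simp only [binForm]
  ring

lemma exists_eq_mul_isCoprime (u s : F[X]) :
    ∃ g u' s' : F[X], u = g * u' ∧ s = g * s' ∧ IsCoprime u' s' := by
  classical
  let := EuclideanDomain.gcdMonoid F[X]
  obtain ⟨u', s', hu, hs, hunit⟩ := extract_gcd u s
  exact ⟨_, u', s', hu, hs, (gcd_isUnit_iff u' s').1 hunit⟩

lemma exists_factor_of_binForm_eq_zero {R : Type*} [CommRing R] [IsDomain R] {P : R[X]}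
    {u s : R} (hs : s ≠ 0) (hus : IsCoprime u s) (h : binForm P u s = 0) :
    ∃ x e, P.coeff 2 = s * x ∧ P.coeff 1 = s * e - u * x ∧ P.coeff 0 = -(u * e) := by
  rw [binForm] at h
  obtain ⟨x, hx⟩ : s ∣ P.coeff 2 := (hus.symm.pow_right (n := 2)).dvd_of_dvd_mul_right
    ⟨-(P.coeff 1 * u + P.coeff 0 * s), by linear_combination h⟩
  have hlin : x * u ^ 2 + P.coeff 1 * u + P.coeff 0 * s = 0 :=
    mul_left_cancel₀ hs (by linear_combination h - hx * u ^ 2)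
  obtain ⟨e, he⟩ : s ∣ x * u + P.coeff 1 := hus.symm.dvd_of_dvd_mul_left
    ⟨-P.coeff 0, by linear_combination hlin⟩
  exact ⟨x, e, hx, by linear_combination he,
    mul_left_cancel₀ hs (by linear_combination hlin - u * he)⟩

variable {ξ : K Fq} {P : Fq[X][X]} {A B C D : ℝ}

lemma QuadSize.coeff_two_ne_zero (hP : QuadSize ξ P A B C) : P.coeff 2 ≠ 0 := by
  rw [← polyToK_ne_zero, ← kabs_pos, hP.lead]
  exact q_rpow_pos A

lemma QuadSize.natDegree_coeff_two (hP : QuadSize ξ P A B C) :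
    ((P.coeff 2).natDegree : ℝ) = A := by
  have hlead := hP.lead
  rw [kabs_polyToK hP.coeff_two_ne_zero] at hlead
  exact le_antisymm (q_rpow_le.1 hlead.le) (q_rpow_le.1 hlead.ge)

lemma QuadSize.binForm_ne_zero_of_isCoprime (hP : QuadSize ξ P A B C)
    (hξ : IsBadlyApproximable ξ D) (hAC : A + C < -2 * D) {u s : Fq[X]} (hs : s ≠ 0)
    (hus : IsCoprime u s) : binForm P u s ≠ 0 := by
  intro h
  obtain ⟨x, e, h₂, h₁, h₀⟩ := exists_factor_of_binForm_eq_zero hs hus h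
  have hx : x ≠ 0 := right_ne_zero_of_mul (h₂ ▸ hP.coeff_two_ne_zero)
  have hfactor : evalK Fq P ξ = (polyToK Fq s * ξ - polyToK Fq u) *
      (polyToK Fq x * ξ - polyToK Fq (-e)) := by
    rw [evalK, eval₂_of_natDegree_le_two _ hP.natDegree_le, h₂, h₁, h₀]
    simp only [map_sub, map_mul, map_neg]
    ring
  have hvalue := mul_le_mul (hξ s u hs) (hξ x (-e) hx) (q_rpow_pos _).le (kabs_nonneg _)
  rw [← kabs_mul, ← hfactor, hP.value, q_rpow_mul, q_rpow_le] at hvalue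
  have hdeg : (s.natDegree : ℝ) + x.natDegree = A := by
    rw [← hP.natDegree_coeff_two, h₂, natDegree_mul hs hx, Nat.cast_add]
  linarith

lemma QuadSize.hasNoRatRoot (hP : QuadSize ξ P A B C) (hξ : IsBadlyApproximable ξ D)
    (hAC : A + C < -2 * D) : HasNoRatRoot P := by
  intro u s hs
  obtain ⟨g, u', s', rfl, rfl, hcop⟩ := exists_eq_mul_isCoprime u s
  rw [binForm_mul_mul]
  exact mul_ne_zero (pow_ne_zero 2 (left_ne_zero_of_mul hs))
    (hP.binForm_ne_zero_of_isCoprime hξ hAC (right_ne_zero_of_mul hs) hcop)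

end RationalRoots

section Resultant

variable {R S : Type*} [CommRing R] [CommRing S] {P Q : R[X]}

/-- The resultant of two polynomials, both regarded as polynomials of degree two. -/
def quadResultant (P Q : R[X]) : R :=
  (P.coeff 2 * Q.coeff 0 - P.coeff 0 * Q.coeff 2) ^ 2
    - (P.coeff 2 * Q.coeff 1 - P.coeff 1 * Q.coeff 2)
      * (P.coeff 1 * Q.coeff 0 - P.coeff 0 * Q.coeff 1)

lemma map_quadResultant (f : R →+* S) (hP : P.natDegree ≤ 2) (hQ : Q.natDegree ≤ 2) (x : S) :
    f (quadResultant P Q) =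
      (f (P.coeff 2) * eval₂ f x Q - eval₂ f x P * f (Q.coeff 2)) ^ 2
        - (f (P.coeff 2) * eval₂ f x (derivative Q) - eval₂ f x (derivative P) * f (Q.coeff 2))
          * (eval₂ f x (derivative P) * eval₂ f x Q
            - eval₂ f x P * eval₂ f x (derivative Q)) := by
  simp only [eval₂_of_natDegree_le_two f hP, eval₂_of_natDegree_le_two f hQ,
    eval₂_derivative_of_natDegree_le_two f hP, eval₂_derivative_of_natDegree_le_two f hQ,
    quadResultant, map_sub, map_mul, map_pow]
  ring

lemma ext_of_natDegree_le_two (hP : P.natDegree ≤ 2) (hQ : Q.natDegree ≤ 2)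
    (h₀ : P.coeff 0 = Q.coeff 0) (h₁ : P.coeff 1 = Q.coeff 1) (h₂ : P.coeff 2 = Q.coeff 2) :
    P = Q := by
  refine (ext_iff_natDegree_le hP hQ).2 fun i hi => ?_
  interval_cases i <;> assumption

lemma HasNoRatRoot.C_mul_eq_C_mul {P Q : F[X][X]} (hno : HasNoRatRoot P) (hP : P.natDegree ≤ 2)
    (hQ : Q.natDegree ≤ 2) (hres : quadResultant P Q = 0) :
    C (P.coeff 2) * Q = C (Q.coeff 2) * P := by
  rw [quadResultant] at hres
  have h₁ : P.coeff 2 * Q.coeff 1 - P.coeff 1 * Q.coeff 2 = 0 := by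
    by_contra hne
    refine hno (-(P.coeff 2 * Q.coeff 0 - P.coeff 0 * Q.coeff 2)) _ hne ?_
    rw [binForm]
    linear_combination P.coeff 2 * hres
  have h₀ : P.coeff 2 * Q.coeff 0 - P.coeff 0 * Q.coeff 2 = 0 := by
    rw [h₁, zero_mul, sub_zero] at hres
    exact pow_eq_zero_iff two_ne_zero |>.1 hres
  refine ext_of_natDegree_le_two ((natDegree_C_mul_le _ _).trans hQ)
    ((natDegree_C_mul_le _ _).trans hP) ?_ ?_ ?_ <;> simp only [coeff_C_mul]
  · linear_combination h₀
  · linear_combination h₁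
  · ring

end Resultant

section SmallValues

variable {ξ : K Fq} {P Q : Fq[X][X]} {A B C : ℝ}

lemma kabs_mul_le_rpow {x y : K Fq} {s t : ℝ} (hx : kabs Fq x ≤ 𝔮 ^ s) (hy : kabs Fq y ≤ 𝔮 ^ t) :
    kabs Fq (x * y) ≤ 𝔮 ^ (s + t) := by
  rw [kabs_mul, ← q_rpow_mul]
  exact mul_le_mul hx hy (kabs_nonneg _) (q_rpow_pos _).le

lemma kabs_sub_le_rpow {x y : K Fq} {s t : ℝ} (hx : kabs Fq x ≤ 𝔮 ^ s) (hy : kabs Fq y ≤ 𝔮 ^ t) :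
    kabs Fq (x - y) ≤ 𝔮 ^ max s t :=
  (kabs_sub_le _ _).trans (max_le (hx.trans (q_rpow_le.2 (le_max_left _ _)))
    (hy.trans (q_rpow_le.2 (le_max_right _ _))))

lemma kabs_two_mul_le (x : K Fq) : kabs Fq (2 * x) ≤ kabs Fq x := by
  rw [two_mul]
  exact (isNonarchimedean_kabs x x).trans_eq (max_self _)

lemma kabs_evalK_derivative_le_Hpoly (hξ : kabs Fq ξ ≤ 1) (hP : P.natDegree ≤ 2) :
    kabs Fq (evalK Fq (derivative P) ξ) ≤ Hpoly Fq P := by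
  rw [evalK, eval₂_derivative_of_natDegree_le_two _ hP]
  refine (isNonarchimedean_kabs _ _).trans (max_le ?_ (kabs_coeff_le_Hpoly P 1))
  rw [kabs_mul]
  exact (mul_le_of_le_one_right (kabs_nonneg _) hξ).trans
    ((kabs_two_mul_le _).trans (kabs_coeff_le_Hpoly P 2))

lemma QuadSize.kabs_quadResultant_lt_one {h w : ℝ} (hP : QuadSize ξ P A B C)
    (hξ : kabs Fq ξ ≤ 1) (hQ : Q.natDegree ≤ 2) (hH : Hpoly Fq Q = 𝔮 ^ h)
    (hw : kabs Fq (evalK Fq Q ξ) ≤ 𝔮 ^ (-(w * h))) (hB : 0 ≤ B) (hBA : B ≤ A) (hh : 0 ≤ h)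
    (hAC : 2 * h + A + C < 0) (hAB : A + B < (w - 1) * h) :
    kabs Fq (polyToK Fq (quadResultant P Q)) < 1 := by
  have hQ₂ : kabs Fq (polyToK Fq (Q.coeff 2)) ≤ 𝔮 ^ h := hH ▸ kabs_coeff_le_Hpoly Q 2
  have hQ₁ : kabs Fq (evalK Fq (derivative Q) ξ) ≤ 𝔮 ^ h :=
    hH ▸ kabs_evalK_derivative_le_Hpoly hξ hQ
  rw [map_quadResultant _ hP.natDegree_le hQ ξ, sq]
  have h₂₀ := kabs_sub_le_rpow (kabs_mul_le_rpow hP.lead.le hw) (kabs_mul_le_rpow hP.value.le hQ₂)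
  have h₂₁ := kabs_sub_le_rpow (kabs_mul_le_rpow hP.lead.le hQ₁) (kabs_mul_le_rpow hP.deriv.le hQ₂)
  have h₁₀ := kabs_sub_le_rpow (kabs_mul_le_rpow hP.deriv.le hw) (kabs_mul_le_rpow hP.value.le hQ₁)
  refine (kabs_sub_le_rpow (kabs_mul_le_rpow h₂₀ h₂₀) (kabs_mul_le_rpow h₂₁ h₁₀)).trans_lt
    (Real.rpow_lt_one_of_one_lt_of_neg one_lt_q ?_)
  have hlead : max (A + -(w * h)) (C + h) < 0 := max_lt (by linarith) (by linarith)
  have hderiv : max (A + h) (B + h) = A + h := max_eq_left (by linarith)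
  have hval : max (B + -(w * h)) (C + h) < -(A + h) := max_lt (by linarith) (by linarith)
  exact max_lt (by linarith) (by linarith)

lemma QuadSize.C_mul_eq_C_mul {h w : ℝ} (hP : QuadSize ξ P A B C) (hno : HasNoRatRoot P)
    (hξ : kabs Fq ξ ≤ 1) (hQ : Q.natDegree ≤ 2) (hH : Hpoly Fq Q = 𝔮 ^ h)
    (hw : kabs Fq (evalK Fq Q ξ) ≤ 𝔮 ^ (-(w * h))) (hB : 0 ≤ B) (hBA : B ≤ A) (hh : 0 ≤ h)
    (hAC : 2 * h + A + C < 0) (hAB : A + B < (w - 1) * h) :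
    Polynomial.C (P.coeff 2) * Q = Polynomial.C (Q.coeff 2) * P := by
  refine hno.C_mul_eq_C_mul hP.natDegree_le hQ ?_
  by_contra hres
  exact (one_le_kabs_polyToK hres).not_gt
    (hP.kabs_quadResultant_lt_one hξ hQ hH hw hB hBA hh hAC hAB)

lemma QuadSize.Hpoly_eq (hP : QuadSize ξ P A B C) (hξ : kabs Fq ξ ≤ 1) (hBA : B ≤ A)
    (hCA : C ≤ A) : Hpoly Fq P = 𝔮 ^ A := by
  have hmul : ∀ x : K Fq, kabs Fq (x * ξ) ≤ kabs Fq x := fun x => by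
    rw [kabs_mul]
    exact mul_le_of_le_one_right (kabs_nonneg _) hξ
  have h₂ : kabs Fq (polyToK Fq (P.coeff 2)) ≤ 𝔮 ^ A := hP.lead.le
  have h₁ : kabs Fq (polyToK Fq (P.coeff 1)) ≤ 𝔮 ^ A := by
    have heq := eval₂_derivative_of_natDegree_le_two (polyToK Fq) hP.natDegree_le ξ
    rw [← sub_eq_of_eq_add' heq]
    exact (kabs_sub_le _ _).trans (max_le (hP.deriv.trans_le (q_rpow_le.2 hBA))
      ((hmul _).trans ((kabs_two_mul_le _).trans h₂)))
  have h₀ : kabs Fq (polyToK Fq (P.coeff 0)) ≤ 𝔮 ^ A := by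
    have heq := eval₂_of_natDegree_le_two (polyToK Fq) hP.natDegree_le ξ
    rw [← sub_eq_of_eq_add' heq, sq, ← mul_assoc]
    exact (kabs_sub_le _ _).trans (max_le (hP.value.trans_le (q_rpow_le.2 hCA))
      ((isNonarchimedean_kabs _ _).trans (max_le ((hmul _).trans ((hmul _).trans h₂))
        ((hmul _).trans h₁))))
  exact le_antisymm (Hpoly_le_of_natDegree_le_two hP.natDegree_le h₀ h₁ h₂)
    (hP.lead.symm.trans_le (kabs_coeff_le_Hpoly P 2))

end SmallValues

section Proportional

variable {P Q : F[X][X]}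

lemma coeff_two_ne_zero_of_C_mul_eq_C_mul (hprop : C (P.coeff 2) * Q = C (Q.coeff 2) * P)
    (hP : P.coeff 2 ≠ 0) (hQ : Q ≠ 0) : Q.coeff 2 ≠ 0 := fun h => by
  rw [h, C_0, zero_mul] at hprop
  exact mul_ne_zero (C_ne_zero.2 hP) hQ hprop

lemma natDegree_coeff_two_le_add {f : F[X]} (hf : f ≠ 0) (hcontent : ∀ g, C g ∣ P → g ∣ f)
    (hprop : C (P.coeff 2) * Q = C (Q.coeff 2) * P) (hP : P.coeff 2 ≠ 0) (hQ : Q ≠ 0) :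
    (P.coeff 2).natDegree ≤ (Q.coeff 2).natDegree + f.natDegree := by
  have hQ₂ := coeff_two_ne_zero_of_C_mul_eq_C_mul hprop hP hQ
  obtain ⟨g, x, y, hx, hy, hxy⟩ := exists_eq_mul_isCoprime (Q.coeff 2) (P.coeff 2)
  have hg : g ≠ 0 := left_ne_zero_of_mul (hy ▸ hP)
  have hcancel : C y * Q = C x * P := by
    refine mul_left_cancel₀ (C_ne_zero.2 hg) ?_
    rw [← mul_assoc, ← mul_assoc, ← C_mul, ← C_mul, ← hy, ← hx, hprop]
  have hyf : y ∣ f := hcontent y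
    ((hxy.symm.map (C : F[X] →+* F[X][X])).dvd_of_dvd_mul_left ⟨Q, hcancel.symm⟩)
  rw [hx, hy, natDegree_mul hg (right_ne_zero_of_mul (hy ▸ hP)),
    natDegree_mul hg (right_ne_zero_of_mul (hx ▸ hQ₂))]
  have := natDegree_le_of_dvd hyf hf
  omega

end Proportional

lemma QuadSize.rpow_sub_le_Hpoly {ξ : K Fq} {P Q : Fq[X][X]} {A B C : ℝ} {f : Fq[X]}
    (hP : QuadSize ξ P A B C) (hf : f ≠ 0) (hcontent : ∀ g, Polynomial.C g ∣ P → g ∣ f)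
    (hprop : Polynomial.C (P.coeff 2) * Q = Polynomial.C (Q.coeff 2) * P) (hQ : Q ≠ 0) :
    𝔮 ^ (A - f.natDegree) ≤ Hpoly Fq Q := by
  refine le_trans ?_ (kabs_coeff_le_Hpoly Q 2)
  rw [kabs_polyToK (coeff_two_ne_zero_of_C_mul_eq_C_mul hprop hP.coeff_two_ne_zero hQ),
    q_rpow_le, ← hP.natDegree_coeff_two, sub_le_iff_le_add]
  exact_mod_cast natDegree_coeff_two_le_add hf hcontent hprop hP.coeff_two_ne_zero hQ

section NearestRoot

lemma evalL_toL_add {P : F[X][X]} (hP : P.natDegree ≤ 2) (ξ : K F) (y : L F) :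
    evalL F P (toL F ξ + y) = toL F (polyToK F (P.coeff 2)) * y ^ 2
      + toL F (evalK F (derivative P) ξ) * y + toL F (evalK F P ξ) := by
  rw [evalL, eval₂_add_of_natDegree_le_two _ hP, φ, ← hom_eval₂, ← hom_eval₂]
  rfl

lemma evalL_toL_sub {P : F[X][X]} (hP : P.natDegree ≤ 2) (ξ : K F) (α : L F) :
    evalL F P α = toL F (polyToK F (P.coeff 2)) * (α - toL F ξ) ^ 2
      + toL F (evalK F (derivative P) ξ) * (α - toL F ξ) + toL F (evalK F P ξ) := by
  rw [← evalL_toL_add hP, add_sub_cancel]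

variable {v : L Fq → ℝ} {ξ : K Fq} {P : Fq[X][X]} {A B C : ℝ} {α : L Fq}

lemma QuadSize.le_sub_of_root (hv : IsAbsExt Fq v) (hP : QuadSize ξ P A B C)
    (hABC : A + C < 2 * B) (hα : evalL Fq P α = 0) : 𝔮 ^ (C - B) ≤ v (toL Fq ξ - α) := by
  rw [evalL_toL_sub hP.natDegree_le] at hα
  have hle := abv_coeff_zero_le_of_root hv.isNonarchimedean (by
    rw [hv.apply_toL, hv.apply_toL, hv.apply_toL, hP.lead, hP.value, hP.deriv, sq, q_rpow_mul,
      q_rpow_mul, q_rpow_lt]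
    linarith) hα
  rw [hv.apply_toL, hv.apply_toL, hP.value, hP.deriv, AbsoluteValue.map_sub] at hle
  refine le_of_mul_le_mul_left ?_ (q_rpow_pos (Fq := Fq) B)
  rwa [q_rpow_mul, add_sub_cancel]

lemma QuadSize.exists_root (hv : IsAbsExt Fq v) (hP : QuadSize ξ P A B C)
    (hABC : A + C < 2 * B) :
    ∃ α, evalL Fq P α = 0 ∧ v (toL Fq ξ - α) = 𝔮 ^ (C - B) := by
  obtain ⟨y, hy, hle⟩ := exists_root_abv_le hv.isNonarchimedean
    (a₀ := toL Fq (evalK Fq P ξ)) (a₁ := toL Fq (evalK Fq (derivative P) ξ))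
    (a₂ := toL Fq (polyToK Fq (P.coeff 2))) (by
      rw [← hv.toAbsoluteValue.ne_zero_iff, hv.apply_toL, hP.deriv]
      exact (q_rpow_pos (Fq := Fq) B).ne')
  rw [← evalL_toL_add hP.natDegree_le] at hy
  refine ⟨_, hy, le_antisymm ?_ (hP.le_sub_of_root hv hABC hy)⟩
  rw [hv.apply_toL, hv.apply_toL, hP.value, hP.deriv] at hle
  refine le_of_mul_le_mul_left ?_ (q_rpow_pos (Fq := Fq) B)
  rw [q_rpow_mul, add_sub_cancel, sub_add_cancel_left]
  exact (congrArg _ (hv.toAbsoluteValue.map_neg y)).trans_le hle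

lemma kabs_evalK_le_Hpoly_mul (hv : IsAbsExt Fq v) (hξ : kabs Fq ξ ≤ 1) (hP : P.natDegree ≤ 2)
    (hα : evalL Fq P α = 0) (hle : v (toL Fq ξ - α) ≤ 1) :
    kabs Fq (evalK Fq P ξ) ≤ Hpoly Fq P * v (toL Fq ξ - α) := by
  change hv.toAbsoluteValue _ ≤ 1 at hle
  change _ ≤ _ * hv.toAbsoluteValue _
  rw [AbsoluteValue.map_sub] at hle ⊢
  rw [evalL_toL_sub hP ξ] at hα
  have hfactor : toL Fq (evalK Fq P ξ) = -((toL Fq (polyToK Fq (P.coeff 2)) * (α - toL Fq ξ)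
      + toL Fq (evalK Fq (derivative P) ξ)) * (α - toL Fq ξ)) := by
    linear_combination hα
  rw [← hv.apply_toL, hfactor, AbsoluteValue.map_neg, map_mul]
  refine mul_le_mul_of_nonneg_right ((hv.isNonarchimedean _ _).trans (max_le ?_ ?_))
    (AbsoluteValue.nonneg _ _)
  · rw [map_mul, hv.apply_toL]
    exact (mul_le_of_le_one_right (kabs_nonneg _) hle).trans (kabs_coeff_le_Hpoly P 2)
  · rw [hv.apply_toL]
    exact kabs_evalK_derivative_le_Hpoly hξ hP

end NearestRoot

section MinimalPolynomial

variable {P Q : F[X][X]} {α : L F}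

lemma φ_injective : Function.Injective (φ F) :=
  (toL F).injective.comp polyToK_injective

lemma exists_prime_of_evalL_eq_zero (hP : P ≠ 0) (h : evalL F P α = 0) :
    ∃ Q, Prime Q ∧ evalL F Q α = 0 := by
  obtain ⟨Q, hQ, hprime⟩ := (RingHom.ker_isPrime (eval₂RingHom (φ F) α)).exists_mem_prime_of_ne_bot
    ((Submodule.ne_bot_iff _).2 ⟨P, h, hP⟩)
  exact ⟨Q, hprime, hQ⟩

lemma natDegree_pos_of_evalL_eq_zero (hP : P ≠ 0) (h : evalL F P α = 0) : 0 < P.natDegree := by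
  refine Nat.pos_of_ne_zero fun h0 => hP ?_
  obtain ⟨f, rfl⟩ := natDegree_eq_zero.1 h0
  rw [evalL, eval₂_C, map_eq_zero_iff _ φ_injective] at h
  rw [h, C_0]

lemma isAlgElem_of_evalL_eq_zero (hP : P ≠ 0) (h : evalL F P α = 0) : IsAlgElem F α := by
  obtain ⟨Q, hprime, hQ⟩ := exists_prime_of_evalL_eq_zero hP h
  set c : F := Q.leadingCoeff.leadingCoeff⁻¹
  have hlead : Q.leadingCoeff.leadingCoeff ≠ 0 := by simp [hprime.ne_zero]
  have hirr : Irreducible (C (C c) * Q) :=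
    (irreducible_isUnit_mul (isUnit_C.2 (isUnit_C.2 (inv_ne_zero hlead).isUnit))).2
      hprime.irreducible
  have hroot : evalL F (C (C c) * Q) α = 0 := by
    rw [evalL, eval₂_mul]
    exact mul_eq_zero_of_right _ hQ
  have hpos := natDegree_pos_of_evalL_eq_zero hirr.ne_zero hroot
  refine ⟨C (C c) * Q, hpos, hirr, hirr.isPrimitive hpos.ne', ?_, hroot⟩
  rw [Monic, leadingCoeff_mul, leadingCoeff_mul, leadingCoeff_C, leadingCoeff_C]
  exact inv_mul_cancel₀ hlead

lemma IsAlgElem.isMinPolyOf (h : IsAlgElem F α) : IsMinPolyOf F (minPolyPrim F α) α := by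
  rw [minPolyPrim, dif_pos h]
  exact h.choose_spec

lemma IsMinPolyOf.dvd (hQ : IsMinPolyOf F Q α) (h : evalL F P α = 0) : Q ∣ P := by
  obtain ⟨-, hirr, hprim, -, hQα⟩ := hQ
  refine hprim.dvd_of_fraction_map_dvd_fraction_map (K := FractionRing F[X]) ?_
  have hirr' := (hprim.irreducible_iff_irreducible_map_fraction_map (K := FractionRing F[X])).1 hirr
  by_contra hndvd
  obtain ⟨x, y, hxy⟩ := hirr'.coprime_iff_not_dvd.2 hndvd
  let g : FractionRing F[X] →+* L F := IsFractionRing.lift φ_injective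
  have hg : g.comp (algebraMap F[X] (FractionRing F[X])) = φ F := RingHom.ext fun z => by simp [g]
  have heval := congrArg (eval₂ g α) hxy
  rw [eval₂_add, eval₂_mul, eval₂_mul, eval₂_map, eval₂_map, hg] at heval
  rw [evalL] at hQα h
  simp [hQα, h] at heval

lemma IsMinPolyOf.two_le_natDegree (hQ : IsMinPolyOf F Q α) (hP : P.natDegree ≤ 2)
    (hno : HasNoRatRoot P) (h : evalL F P α = 0) : 2 ≤ Q.natDegree := by
  have hpos := hQ.1
  have hroot := hQ.2.2.2.2
  by_contra! hlt
  have hdeg : Q.natDegree = 1 := by omega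
  rw [evalL, eval₂_of_natDegree_le_two _ (by omega),
    coeff_eq_zero_of_natDegree_lt (show Q.natDegree < 2 by omega), map_zero, zero_mul,
    zero_add] at hroot
  have hne : Q.coeff 1 ≠ 0 := by
    rw [← hdeg]
    exact leadingCoeff_ne_zero.2 hQ.2.1.ne_zero
  refine hno (-Q.coeff 0) (Q.coeff 1) hne (φ_injective ?_)
  rw [map_binForm (φ F) hP (t := α) (by rw [map_neg]; linear_combination -hroot), map_zero]
  exact mul_eq_zero_of_right _ h

lemma degAlg_le_of_evalL_eq_zero (hP : P ≠ 0) (h : evalL F P α = 0) :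
    degAlg F α ≤ P.natDegree :=
  natDegree_le_of_dvd ((isAlgElem_of_evalL_eq_zero hP h).isMinPolyOf.dvd h) hP

end MinimalPolynomial

section HeightAlg

variable {P : Fq[X][X]} {α : L Fq}

lemma Hpoly_le_Hpoly_mul_C {f : Fq[X]} (hf : f ≠ 0) : Hpoly Fq P ≤ Hpoly Fq (P * C f) := by
  refine ciSup_le fun i => le_trans ?_ (kabs_coeff_le_Hpoly (P * C f) i)
  rw [coeff_mul_C, map_mul, kabs_mul]
  exact le_mul_of_one_le_right (kabs_nonneg _) (one_le_kabs_polyToK hf)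

lemma one_le_heightAlg (h : IsAlgElem Fq α) : 1 ≤ heightAlg Fq α :=
  one_le_Hpoly h.isMinPolyOf.2.1.ne_zero

lemma heightAlg_le_Hpoly (hP : P.natDegree ≤ 2) (hP0 : P ≠ 0) (hno : HasNoRatRoot P)
    (h : evalL Fq P α = 0) : heightAlg Fq α ≤ Hpoly Fq P := by
  have hmin := (isAlgElem_of_evalL_eq_zero hP0 h).isMinPolyOf
  have hdeg := hmin.two_le_natDegree hP hno h
  obtain ⟨k, hk⟩ := hmin.dvd h
  have hk0 : k ≠ 0 := right_ne_zero_of_mul (hk ▸ hP0)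
  have hkdeg : k.natDegree = 0 := by
    have hadd := natDegree_mul hmin.2.1.ne_zero hk0
    rw [← hk] at hadd
    omega
  obtain ⟨f, rfl⟩ := natDegree_eq_zero.1 hkdeg
  exact (Hpoly_le_Hpoly_mul_C (C_ne_zero.1 hk0)).trans_eq (congrArg _ hk.symm)

lemma finite_setOf_heightAlg_le (n : ℕ) (M : ℝ) :
    {α : L Fq | IsAlgElem Fq α ∧ degAlg Fq α ≤ n ∧ heightAlg Fq α ≤ M}.Finite := by
  classical
  refine ((finite_setOf_Hpoly_le n M).biUnion fun P _ =>
    (P.map (φ Fq)).roots.toFinset.finite_toSet).subset ?_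
  rintro α ⟨halg, hdeg, hheight⟩
  refine Set.mem_biUnion (show minPolyPrim Fq α ∈ _ from ⟨hdeg, hheight⟩) ?_
  have hmin := halg.isMinPolyOf
  have hne := (Polynomial.map_ne_zero_iff φ_injective).2 hmin.2.1.ne_zero
  rw [Finset.mem_coe, Multiset.mem_toFinset, mem_roots hne, IsRoot, eval_map]
  exact hmin.2.2.2.2

end HeightAlg

lemma exists_le_lt_succ_of_tendsto_atTop {u : ℕ → ℝ} (hu : Tendsto u atTop atTop) {k₀ : ℕ} {t : ℝ}
    (ht : u k₀ ≤ t) : ∃ k, k₀ ≤ k ∧ u k ≤ t ∧ t < u (k + 1) := by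
  by_contra! hstep
  have hle : ∀ k, k₀ ≤ k → u k ≤ t := fun k hk =>
    Nat.le_induction ht (fun m hm ih => hstep m hm ih) k hk
  obtain ⟨k, hk, hlt⟩ := ((eventually_ge_atTop k₀).and (hu.eventually_gt_atTop t)).exists
  exact (hle k hk).not_gt hlt

lemma infinite_of_forall_exists_lt_rpow {X : Type*} {Z : Set X} (g : X → ℝ)
    (hpos : ∀ x ∈ Z, 0 < g x) (hsmall : ∀ M : ℝ, ∃ x ∈ Z, g x < 𝔮 ^ (-M)) : Z.Infinite := by
  intro hfin
  obtain ⟨x, hx, -⟩ := hsmall 0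
  obtain ⟨y, hy, hmin⟩ := Set.exists_min_image Z g hfin ⟨x, hx⟩
  obtain ⟨z, hz, hlt⟩ := hsmall (-Real.logb 𝔮 (g y))
  rw [neg_neg, Real.rpow_logb q_pos one_lt_q.ne' (hpos y hy)] at hlt
  exact (hmin z hz).not_gt hlt

lemma sSup_coe_eq_of_forall {p : ℝ → Prop} {t : ℝ} (ht : 0 < t) (hupper : ∀ y, t < y → ¬ p y)
    (hlower : ∀ y, 0 ≤ y → y < t → p y) :
    sSup {x : EReal | ∃ y : ℝ, x = (y : EReal) ∧ p y} = (t : EReal) := by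
  refine le_antisymm (sSup_le ?_) (le_of_forall_lt fun z hz => ?_)
  · rintro x ⟨y, rfl, hy⟩
    exact EReal.coe_le_coe_iff.2 (not_lt.1 fun hlt => hupper y hlt hy)
  · obtain ⟨y, hzy, hyt⟩ := EReal.lt_iff_exists_real_btwn.1 hz
    have hmax : max y 0 < t := max_lt (EReal.coe_lt_coe_iff.1 hyt) ht
    calc z < (y : EReal) := hzy
      _ ≤ (max y 0 : ℝ) := EReal.coe_le_coe_iff.2 (le_max_left _ _)
      _ ≤ sSup {x : EReal | ∃ y : ℝ, x = (y : EReal) ∧ p y} :=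
        le_sSup ⟨_, rfl, hlower _ (le_max_right _ _) hmax⟩

/-- A quadratic polynomial `P`, of bounded content, with a root much closer to `ξ` than its
conjugate; the sizes `A`, `B`, `C` are those of `QuadSize`. -/
structure ApproxQuad (ξ : K Fq) (f : Fq[X]) (P : Fq[X][X]) (A B C : ℝ) : Prop
    extends QuadSize ξ P A B C where
  dvd_of_C_dvd : ∀ g, Polynomial.C g ∣ P → g ∣ f
  hasNoRatRoot : HasNoRatRoot P
  deriv_nonneg : 0 ≤ B
  deriv_le_lead : B ≤ A
  value_le_deriv : C ≤ B
  lead_add_value_lt : A + C < 2 * B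

section ApproxQuad

variable {ξ : K Fq} {f : Fq[X]} {P Q : Fq[X][X]} {A B C h y : ℝ} {v : L Fq → ℝ} {α : L Fq}

lemma ApproxQuad.Hpoly_eq (hP : ApproxQuad ξ f P A B C) (hξ : kabs Fq ξ ≤ 1) :
    Hpoly Fq P = 𝔮 ^ A :=
  hP.toQuadSize.Hpoly_eq hξ hP.deriv_le_lead (hP.value_le_deriv.trans hP.deriv_le_lead)

lemma ApproxQuad.ne_zero (hP : ApproxQuad ξ f P A B C) : P ≠ 0 := by
  rintro rfl
  exact hP.coeff_two_ne_zero (coeff_zero 2)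

lemma ApproxQuad.Hpoly_eq_of_C_mul_eq_C_mul (hP : ApproxQuad ξ f P A B C) (hξ : kabs Fq ξ ≤ 1)
    (hQ : Q.natDegree ≤ 2)
    (hprop : Polynomial.C (P.coeff 2) * Q = Polynomial.C (Q.coeff 2) * P) :
    Hpoly Fq Q = kabs Fq (polyToK Fq (Q.coeff 2)) := by
  have hle : ∀ i, kabs Fq (polyToK Fq (Q.coeff i)) ≤ kabs Fq (polyToK Fq (Q.coeff 2)) := by
    intro i
    have hi := congrArg (fun R => kabs Fq (polyToK Fq (R.coeff i))) hprop
    simp only [coeff_C_mul, map_mul, kabs_mul, hP.lead] at hi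
    refine le_of_mul_le_mul_left ?_ (q_rpow_pos (Fq := Fq) A)
    rw [hi, mul_comm, ← hP.Hpoly_eq hξ]
    exact mul_le_mul_of_nonneg_right (kabs_coeff_le_Hpoly P i) (kabs_nonneg _)
  exact le_antisymm (Hpoly_le_of_natDegree_le_two hQ (hle 0) (hle 1) (hle 2))
    (kabs_coeff_le_Hpoly Q 2)

lemma ApproxQuad.kabs_evalK_of_C_mul_eq_C_mul (hP : ApproxQuad ξ f P A B C) (hξ : kabs Fq ξ ≤ 1)
    (hQ : Q.natDegree ≤ 2) (hH : Hpoly Fq Q = 𝔮 ^ h)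
    (hprop : Polynomial.C (P.coeff 2) * Q = Polynomial.C (Q.coeff 2) * P) :
    kabs Fq (evalK Fq Q ξ) = 𝔮 ^ (h + C - A) := by
  have hval := congrArg (fun R => kabs Fq (evalK Fq R ξ)) hprop
  rw [hP.Hpoly_eq_of_C_mul_eq_C_mul hξ hQ hprop] at hH
  simp only [evalK, eval₂_mul, eval₂_C, kabs_mul, hP.lead, hH] at hval
  refine mul_left_cancel₀ (q_rpow_pos (Fq := Fq) A).ne' ?_
  rw [evalK, hval, ← evalK, hP.value, q_rpow_mul, q_rpow_mul, add_sub_cancel]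

lemma ApproxQuad.sub_natDegree_le (hP : ApproxQuad ξ f P A B C) (hf : f ≠ 0) (hQ : Q ≠ 0)
    (hH : Hpoly Fq Q = 𝔮 ^ h)
    (hprop : Polynomial.C (P.coeff 2) * Q = Polynomial.C (Q.coeff 2) * P) :
    A - f.natDegree ≤ h :=
  q_rpow_le.1 ((hP.rpow_sub_le_Hpoly hf hP.dvd_of_C_dvd hprop hQ).trans_eq hH)

lemma ApproxQuad.evalL_eq_zero_of_C_mul_eq_C_mul (hP : ApproxQuad ξ f P A B C) (hQ : Q ≠ 0)
    (hprop : Polynomial.C (P.coeff 2) * Q = Polynomial.C (Q.coeff 2) * P)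
    (hα : evalL Fq Q α = 0) : evalL Fq P α = 0 := by
  have hval := congrArg (evalL Fq · α) hprop
  simp only [evalL, eval₂_mul, eval₂_C] at hval hα ⊢
  rw [hα, mul_zero, eq_comm, mul_eq_zero] at hval
  exact hval.resolve_left ((map_ne_zero_iff _ φ_injective).2
    (coeff_two_ne_zero_of_C_mul_eq_C_mul hprop hP.coeff_two_ne_zero hQ))

lemma ApproxQuad.mem_approximants (hP : ApproxQuad ξ f P A B C) (hξ : kabs Fq ξ ≤ 1)
    (hy : C ≤ A * -y) :
    P.natDegree ≤ 2 ∧ 0 < kabs Fq (evalK Fq P ξ) ∧ kabs Fq (evalK Fq P ξ) ≤ Hpoly Fq P ^ (-y) := by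
  rw [hP.value, hP.Hpoly_eq hξ, q_rpow_rpow, q_rpow_le]
  exact ⟨hP.natDegree_le, q_rpow_pos C, hy⟩

lemma ApproxQuad.exists_algebraic_approximant (hP : ApproxQuad ξ f P A B C) (hv : IsAbsExt Fq v)
    (hξ : kabs Fq ξ ≤ 1) (hy₀ : 0 ≤ y) (hy : C - B ≤ A * (-y - 1)) :
    ∃ α, (IsAlgElem Fq α ∧ degAlg Fq α ≤ 2 ∧ 0 < v (toL Fq ξ - α) ∧
      v (toL Fq ξ - α) ≤ heightAlg Fq α ^ (-y - 1)) ∧ v (toL Fq ξ - α) = 𝔮 ^ (C - B) := by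
  obtain ⟨α, hroot, hα⟩ := hP.exists_root hv hP.lead_add_value_lt
  have halg := isAlgElem_of_evalL_eq_zero hP.ne_zero hroot
  have hheight := heightAlg_le_Hpoly hP.natDegree_le hP.ne_zero hP.hasNoRatRoot hroot
  refine ⟨α, ⟨halg, (degAlg_le_of_evalL_eq_zero hP.ne_zero hroot).trans hP.natDegree_le,
    hα ▸ q_rpow_pos _, ?_⟩, hα⟩
  calc v (toL Fq ξ - α) ≤ 𝔮 ^ (A * (-y - 1)) := hα.trans_le (q_rpow_le.2 hy)
    _ = Hpoly Fq P ^ (-y - 1) := by rw [hP.Hpoly_eq hξ, q_rpow_rpow]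
    _ ≤ heightAlg Fq α ^ (-y - 1) := Real.rpow_le_rpow_of_nonpos
      (one_pos.trans_le (one_le_heightAlg halg)) hheight (by linarith)

end ApproxQuad

/-- Quadratic polynomials `P k` of bounded content whose sizes are asymptotic to `α w ^ k`,
`β w ^ k` and `-γ w ^ k`. The condition `gap` says that consecutive members are close enough for
every good quadratic approximation of `ξ` to be proportional to some `P k`. -/
structure QuadFamily (ξ : K Fq) (f : Fq[X]) (w α β γ : ℝ) (P : ℕ → Fq[X][X]) (A B C : ℕ → ℝ) :
    Prop where
  quadSize : ∀ᶠ k in atTop, QuadSize ξ (P k) (A k) (B k) (C k)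
  dvd_of_C_dvd : ∀ᶠ k in atTop, ∀ g, Polynomial.C g ∣ P k → g ∣ f
  tendsto_lead : Tendsto (fun k => A k / w ^ k) atTop (nhds α)
  tendsto_deriv : Tendsto (fun k => B k / w ^ k) atTop (nhds β)
  tendsto_value : Tendsto (fun k => C k / w ^ k) atTop (nhds (-γ))
  one_lt : 1 < w
  deriv_pos : 0 < β
  deriv_lt : β < α
  two_mul_le : 2 * α ≤ β + γ
  gap : 2 * α * w * (α + β) < (β + γ - 2 * α) * (γ - α)

namespace QuadFamily

variable {ξ : K Fq} {f : Fq[X]} {w α β γ : ℝ} {P : ℕ → Fq[X][X]} {A B C : ℕ → ℝ} {D y : ℝ}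

lemma eventually_lt_zero (hF : QuadFamily ξ f w α β γ P A B C) (x y z G : ℝ)
    (hneg : x * α + y * β - z * γ < 0) :
    ∀ᶠ k in atTop, x * A k + y * B k + z * C k + G < 0 := by
  have hG : Tendsto (fun k : ℕ => G / w ^ k) atTop (nhds 0) :=
    (tendsto_pow_atTop_atTop_of_one_lt hF.one_lt).const_div_atTop G
  have hlim := (((hF.tendsto_lead.const_mul x).add (hF.tendsto_deriv.const_mul y)).add
    (hF.tendsto_value.const_mul z)).add hG
  filter_upwards [hlim.eventually_lt_const (show _ < (0 : ℝ) by linarith)] with k hk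
  have hw : 0 < w ^ k := pow_pos (one_pos.trans hF.one_lt) k
  rw [← mul_div_assoc, ← mul_div_assoc, ← mul_div_assoc, ← add_div, ← add_div, ← add_div] at hk
  exact neg_of_div_neg_left hk hw.le

lemma eventually_succ_lt (hF : QuadFamily ξ f w α β γ P A B C) :
    ∀ᶠ k in atTop, A (k + 1) + B (k + 1)
      < ((β + γ) / α - 1 - 1) * (-(A k + C k) / 2) := by
  have hα : 0 < α := hF.deriv_pos.trans hF.deriv_lt
  have hw : 0 < w := one_pos.trans hF.one_lt
  have hnext := ((hF.tendsto_lead.add hF.tendsto_deriv).comp (tendsto_add_atTop_nat 1)).const_mul w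
  have hthis := ((hF.tendsto_lead.add hF.tendsto_value).neg.div_const 2).const_mul
    ((β + γ) / α - 1 - 1)
  have hlim : w * (α + β) < ((β + γ) / α - 1 - 1) * (-(α + -γ) / 2) := by
    have hgap := hF.gap
    have heq : ((β + γ) / α - 1 - 1) * (-(α + -γ) / 2)
        = (β + γ - 2 * α) * (γ - α) / (2 * α) := by
      field_simp
      ring
    rw [heq, lt_div_iff₀ (by positivity)]
    linarith
  filter_upwards [hnext.eventually_lt hthis hlim] with k hk
  have hleft : w * (A (k + 1) / w ^ (k + 1) + B (k + 1) / w ^ (k + 1))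
      = (A (k + 1) + B (k + 1)) / w ^ k := by
    rw [pow_succ]
    field_simp
  have hright : ((β + γ) / α - 1 - 1) * (-(A k / w ^ k + C k / w ^ k) / 2)
      = ((β + γ) / α - 1 - 1) * (-(A k + C k) / 2) / w ^ k := by ring
  simp only [Function.comp_apply, hleft, hright] at hk
  exact (div_lt_div_iff_of_pos_right (pow_pos hw k)).1 hk

lemma eventually_approxQuad (hF : QuadFamily ξ f w α β γ P A B C)
    (hξ : IsBadlyApproximable ξ D) :
    ∀ᶠ k in atTop, ApproxQuad ξ f (P k) (A k) (B k) (C k) := by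
  have hβ := hF.deriv_pos
  have hβα := hF.deriv_lt
  have hγ := hF.two_mul_le
  filter_upwards [hF.quadSize, hF.dvd_of_C_dvd, hF.eventually_lt_zero 0 (-1) 0 0 (by linarith),
    hF.eventually_lt_zero (-1) 1 0 0 (by linarith), hF.eventually_lt_zero 1 (-2) 1 0 (by linarith),
    hF.eventually_lt_zero 1 0 1 (2 * D) (by linarith)] with k hsize hdvd hB hBA hACB hAC
  exact ⟨hsize, hdvd, hsize.hasNoRatRoot hξ (by linarith), by linarith, by linarith, by linarith,
    by linarith⟩

lemma tendsto_neg_lead_add_value (hF : QuadFamily ξ f w α β γ P A B C) :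
    Tendsto (fun k => -(A k + C k) / 2) atTop atTop := by
  refine tendsto_atTop.2 fun t => ?_
  have hβα := hF.deriv_lt
  have hγ := hF.two_mul_le
  filter_upwards [hF.eventually_lt_zero 1 0 1 (2 * t) (by linarith)] with k hk
  linarith

lemma exists_C_mul_eq_C_mul (hF : QuadFamily ξ f w α β γ P A B C) (hξ : IsBadlyApproximable ξ D)
    (hξ₁ : kabs Fq ξ ≤ 1) {p : ℕ → Prop} (hp : ∀ᶠ k in atTop, p k) :
    ∃ H₀ : ℝ, ∀ Q : Fq[X][X], Q ≠ 0 → Q.natDegree ≤ 2 → H₀ < Hpoly Fq Q →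
      kabs Fq (evalK Fq Q ξ) ≤ Hpoly Fq Q ^ (-((β + γ) / α - 1)) →
      ∃ k, p k ∧ ApproxQuad ξ f (P k) (A k) (B k) (C k) ∧
        Polynomial.C ((P k).coeff 2) * Q = Polynomial.C (Q.coeff 2) * P k := by
  obtain ⟨k₀, hk₀⟩ := eventually_atTop.1
    ((hp.and (hF.eventually_approxQuad hξ)).and hF.eventually_succ_lt)
  refine ⟨𝔮 ^ (-(A k₀ + C k₀) / 2), fun Q hQ hdeg hlarge hsmall => ?_⟩
  obtain ⟨h, hh, hH⟩ := exists_Hpoly_eq_rpow hQ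
  rw [hH, q_rpow_lt] at hlarge
  obtain ⟨k, hk, hle, hlt⟩ :=
    exists_le_lt_succ_of_tendsto_atTop hF.tendsto_neg_lead_add_value hlarge.le
  obtain ⟨hpk, hP⟩ := (hk₀ (k + 1) (by omega)).1
  refine ⟨k + 1, hpk, hP, hP.C_mul_eq_C_mul (w := (β + γ) / α - 1) hP.hasNoRatRoot hξ₁ hdeg hH ?_
    hP.deriv_nonneg hP.deriv_le_lead hh (by linarith) ((hk₀ k hk).2.trans_le ?_)⟩
  · rwa [hH, q_rpow_rpow, mul_neg, mul_comm] at hsmall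
  · refine mul_le_mul_of_nonneg_left hle ?_
    have hα : 0 < α := hF.deriv_pos.trans hF.deriv_lt
    have htwo : 2 ≤ (β + γ) / α := (le_div_iff₀ hα).2 hF.two_mul_le
    linarith

lemma infinite_approximants (hF : QuadFamily ξ f w α β γ P A B C) (hξ : IsBadlyApproximable ξ D)
    (hξ₁ : kabs Fq ξ ≤ 1) (hy : y < γ / α) :
    {Q : Fq[X][X] | Q.natDegree ≤ 2 ∧ 0 < kabs Fq (evalK Fq Q ξ) ∧
      kabs Fq (evalK Fq Q ξ) ≤ Hpoly Fq Q ^ (-y)}.Infinite := by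
  have hβ := hF.deriv_pos
  have hβα := hF.deriv_lt
  have hγ := hF.two_mul_le
  rw [lt_div_iff₀ (by linarith)] at hy
  refine infinite_of_forall_exists_lt_rpow (Fq := Fq) (fun Q => kabs Fq (evalK Fq Q ξ))
    (fun Q hQ => hQ.2.1) fun M => ?_
  obtain ⟨k, hP, hyk, hMk⟩ := ((hF.eventually_approxQuad hξ).and
    ((hF.eventually_lt_zero y 0 1 0 (by linarith)).and
      (hF.eventually_lt_zero 0 0 1 M (by linarith)))).exists
  exact ⟨P k, hP.mem_approximants hξ₁ (by linarith), by rw [hP.value, q_rpow_lt]; linarith⟩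

lemma infinite_algebraic_approximants {v : L Fq → ℝ} (hF : QuadFamily ξ f w α β γ P A B C)
    (hv : IsAbsExt Fq v) (hξ : IsBadlyApproximable ξ D) (hξ₁ : kabs Fq ξ ≤ 1) (hy₀ : 0 ≤ y)
    (hy : y < (β + γ) / α - 1) :
    {x : L Fq | IsAlgElem Fq x ∧ degAlg Fq x ≤ 2 ∧ 0 < v (toL Fq ξ - x) ∧
      v (toL Fq ξ - x) ≤ heightAlg Fq x ^ (-y - 1)}.Infinite := by
  have hβ := hF.deriv_pos
  have hβα := hF.deriv_lt
  have hγ := hF.two_mul_le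
  rw [lt_sub_iff_add_lt, lt_div_iff₀ (by linarith)] at hy
  refine infinite_of_forall_exists_lt_rpow (Fq := Fq) (fun x => v (toL Fq ξ - x))
    (fun x hx => hx.2.2.1) fun M => ?_
  obtain ⟨k, hP, hyk, hMk⟩ := ((hF.eventually_approxQuad hξ).and
    ((hF.eventually_lt_zero (y + 1) (-1) 1 0 (by linarith)).and
      (hF.eventually_lt_zero 0 (-1) 1 M (by linarith)))).exists
  obtain ⟨x, hx, hvalue⟩ := hP.exists_algebraic_approximant hv hξ₁ hy₀ (by linarith)
  exact ⟨x, hx, by rw [hvalue, q_rpow_lt]; linarith⟩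

lemma finite_approximants (hF : QuadFamily ξ f w α β γ P A B C) (hf : f ≠ 0)
    (hξ : IsBadlyApproximable ξ D) (hξ₁ : kabs Fq ξ ≤ 1) (hy : γ / α < y) :
    {Q : Fq[X][X] | Q.natDegree ≤ 2 ∧ 0 < kabs Fq (evalK Fq Q ξ) ∧
      kabs Fq (evalK Fq Q ξ) ≤ Hpoly Fq Q ^ (-y)}.Finite := by
  have hβ := hF.deriv_pos
  have hβα := hF.deriv_lt
  have hγ := hF.two_mul_le
  have hα : 0 < α := hβ.trans hβα
  have hstar : (β + γ) / α - 1 ≤ y := by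
    refine le_trans ?_ hy.le
    rw [sub_le_iff_le_add, div_add_one hα.ne', div_le_div_iff_of_pos_right hα]
    linarith
  rw [div_lt_iff₀ hα] at hy
  obtain ⟨H₀, hH₀⟩ := hF.exists_C_mul_eq_C_mul hξ hξ₁
    (hF.eventually_lt_zero (-y) 0 (-1) ((1 + y) * f.natDegree) (by linarith))
  refine (finite_setOf_Hpoly_le 2 H₀).subset ?_
  rintro Q ⟨hdeg, hpos, hle⟩
  refine ⟨hdeg, not_lt.1 fun hlarge => ?_⟩
  have hQ : Q ≠ 0 := by
    rintro rfl
    simp [evalK, kabs_zero] at hpos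
  obtain ⟨h, -, hH⟩ := exists_Hpoly_eq_rpow hQ
  obtain ⟨k, hk, hP, hprop⟩ := hH₀ Q hQ hdeg hlarge
    (hle.trans (Real.rpow_le_rpow_of_exponent_le (one_le_Hpoly hQ) (neg_le_neg hstar)))
  have hheight := hP.sub_natDegree_le hf hQ hH hprop
  rw [hP.kabs_evalK_of_C_mul_eq_C_mul hξ₁ hdeg hH hprop, hH, q_rpow_rpow, q_rpow_le] at hle
  have hone : 0 ≤ 1 + y := by
    have : 2 ≤ (β + γ) / α := (le_div_iff₀ hα).2 hγ
    linarith
  linarith [mul_le_mul_of_nonneg_left hheight hone]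

lemma finite_algebraic_approximants {v : L Fq → ℝ} (hF : QuadFamily ξ f w α β γ P A B C)
    (hv : IsAbsExt Fq v) (hf : f ≠ 0) (hξ : IsBadlyApproximable ξ D) (hξ₁ : kabs Fq ξ ≤ 1)
    (hy : (β + γ) / α - 1 < y) :
    {x : L Fq | IsAlgElem Fq x ∧ degAlg Fq x ≤ 2 ∧ 0 < v (toL Fq ξ - x) ∧
      v (toL Fq ξ - x) ≤ heightAlg Fq x ^ (-y - 1)}.Finite := by
  have hα : 0 < α := hF.deriv_pos.trans hF.deriv_lt
  have hone : 0 ≤ 1 + y := by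
    have : 2 ≤ (β + γ) / α := (le_div_iff₀ hα).2 hF.two_mul_le
    linarith
  have hstar := hy.le
  rw [sub_lt_iff_lt_add, div_lt_iff₀ hα] at hy
  obtain ⟨H₀, hH₀⟩ := hF.exists_C_mul_eq_C_mul hξ hξ₁
    (hF.eventually_lt_zero (-(1 + y)) 1 (-1) ((1 + y) * f.natDegree) (by linarith))
  refine (finite_setOf_heightAlg_le 2 H₀).subset ?_
  rintro x ⟨halg, hdeg, -, hle⟩
  refine ⟨halg, hdeg, not_lt.1 fun hlarge => ?_⟩
  obtain ⟨-, hirr, -, -, hroot⟩ := halg.isMinPolyOf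
  rw [degAlg] at hdeg
  rw [heightAlg] at hle hlarge
  set Q := minPolyPrim Fq x
  have hQ : Q ≠ 0 := hirr.ne_zero
  obtain ⟨h, hh, hH⟩ := exists_Hpoly_eq_rpow hQ
  rw [hH, q_rpow_rpow] at hle
  have hnear : v (toL Fq ξ - x) ≤ 1 := hle.trans
    (Real.rpow_le_one_of_one_le_of_nonpos one_lt_q.le (by nlinarith))
  have hvalue : kabs Fq (evalK Fq Q ξ) ≤ Hpoly Fq Q ^ (-((β + γ) / α - 1)) := by
    refine (kabs_evalK_le_Hpoly_mul hv hξ₁ hdeg hroot hnear).trans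
      ((mul_le_mul_of_nonneg_left hle (hH ▸ q_rpow_pos h).le).trans ?_)
    rw [hH, q_rpow_rpow, q_rpow_mul, q_rpow_le]
    linarith [mul_le_mul_of_nonneg_left hstar hh]
  obtain ⟨k, hk, hP, hprop⟩ := hH₀ Q hQ hdeg hlarge hvalue
  have hfar := (hP.le_sub_of_root hv hP.lead_add_value_lt
    (hP.evalL_eq_zero_of_C_mul_eq_C_mul hQ hprop hroot)).trans hle
  rw [q_rpow_le] at hfar
  linarith [mul_le_mul_of_nonneg_left (hP.sub_natDegree_le hf hQ hH hprop) hone]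

theorem wExp_two_eq (hF : QuadFamily ξ f w α β γ P A B C) (hf : f ≠ 0)
    (hξ : IsBadlyApproximable ξ D) (hξ₁ : kabs Fq ξ ≤ 1) :
    wExp Fq 2 ξ = ((γ / α : ℝ) : EReal) := by
  have hβ := hF.deriv_pos
  have hβα := hF.deriv_lt
  have hγ := hF.two_mul_le
  exact sSup_coe_eq_of_forall (div_pos (by linarith) (by linarith))
    (fun y hy => Set.not_infinite.2 (hF.finite_approximants hf hξ hξ₁ hy))
    fun y _ hy => hF.infinite_approximants hξ hξ₁ hy

theorem wStarExp_two_eq {v : L Fq → ℝ} (hF : QuadFamily ξ f w α β γ P A B C)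
    (hv : IsAbsExt Fq v) (hf : f ≠ 0) (hξ : IsBadlyApproximable ξ D) (hξ₁ : kabs Fq ξ ≤ 1) :
    wStarExp Fq v 2 ξ = (((β + γ) / α - 1 : ℝ) : EReal) := by
  have htwo : 2 ≤ (β + γ) / α :=
    (le_div_iff₀ (hF.deriv_pos.trans hF.deriv_lt)).2 hF.two_mul_le
  exact sSup_coe_eq_of_forall (by linarith)
    (fun y hy => Set.not_infinite.2 (hF.finite_algebraic_approximants hv hf hξ hξ₁ hy))
    fun y hy₀ hy => hF.infinite_algebraic_approximants hv hξ hξ₁ hy₀ hy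

end QuadFamily

/-- The places `R j + m * S j` with `m ≥ 1` that overshoot the mark `R (j + 1)` by at most one,
where the letter `d` is put unless the place is itself a mark. -/
def IsStep (R S : ℕ → ℕ) (n : ℕ) : Prop :=
  ∃ j, 1 ≤ j ∧ ∃ m, 1 ≤ m ∧ 0 < S j ∧ R j + m * S j ≤ R (j + 1) + 1 ∧ n = R j + m * S j

/-- The word written from the first letter on with `c` at the marks `R i`, `d` at the remaining
steps, and `b` elsewhere. -/
structure IsSteppedWord {T : Type*} (a : ℕ → T) (b c d : T) (R S : ℕ → ℕ) : Prop where
  apply_mark (i : ℕ) : a (R i) = c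
  apply_step {n : ℕ} : 1 ≤ n → n ∉ Set.range R → IsStep R S n → a n = d
  apply_other {n : ℕ} : 1 ≤ n → n ∉ Set.range R → ¬ IsStep R S n → a n = b

/-- The stretch of a stepped word between consecutive marks `R₀` and `R₁`, with period `s`.
The letter after `R₀` is left open: the steps of the previous stretch may overshoot onto it. -/
structure IsBlock {T : Type*} (a : ℕ → T) (b c d : T) (R₀ R₁ s : ℕ) : Prop where
  first : a R₀ = c
  last : a R₁ = c
  second : a (R₀ + 1) = b ∨ a (R₀ + 1) = d
  inner {n : ℕ} : 1 < n → R₀ + n < R₁ → a (R₀ + n) = if s ∣ n then d else b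

section Word

variable {T : Type*} {a : ℕ → T} {b c d : T} {R S : ℕ → ℕ} {R₀ R₁ s : ℕ}

lemma IsSteppedWord.eq_or_eq_or_eq (hW : IsSteppedWord a b c d R S) {n : ℕ} (hn : 1 ≤ n) :
    a n = b ∨ a n = c ∨ a n = d := by
  by_cases hmark : n ∈ Set.range R
  · obtain ⟨i, rfl⟩ := hmark
    exact Or.inr (Or.inl (hW.apply_mark i))
  · by_cases hstep : IsStep R S n
    · exact Or.inr (Or.inr (hW.apply_step hn hmark hstep))
    · exact Or.inl (hW.apply_other hn hmark hstep)

lemma notMem_range_of_lt_of_lt (hR : StrictMono R) {j n : ℕ} (h₀ : R j < n) (h₁ : n < R (j + 1)) :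
    n ∉ Set.range R := by
  rintro ⟨i, rfl⟩
  have := hR.lt_iff_lt.1 h₀
  have := hR.lt_iff_lt.1 h₁
  omega

lemma isStep_add_iff_dvd (hR : StrictMono R) {j n : ℕ} (hj : 1 ≤ j) (hS : 0 < S j) (hn : 1 < n)
    (hlt : R j + n < R (j + 1)) : IsStep R S (R j + n) ↔ S j ∣ n := by
  constructor
  · rintro ⟨k, -, m, -, -, hle, heq⟩
    have hjk : j ≤ k := by
      by_contra! hkj
      have := hR.monotone (show k + 1 ≤ j from hkj)
      omega
    have hkj : k ≤ j := by
      by_contra! hjk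
      have := hR.monotone (show j + 1 ≤ k from hjk)
      omega
    obtain rfl := le_antisymm hjk hkj
    exact ⟨m, by rw [mul_comm]; omega⟩
  · rintro ⟨m, rfl⟩
    have hm : m ≠ 0 := by rintro rfl; simp at hn
    rw [mul_comm] at hlt ⊢
    exact ⟨j, hj, m, by omega, hS, by omega, rfl⟩

lemma IsSteppedWord.isBlock (hW : IsSteppedWord a b c d R S) (hR : StrictMono R) {j : ℕ}
    (hj : 1 ≤ j) (hS : 0 < S j) (hgap : R j + 1 < R (j + 1)) :
    IsBlock a b c d (R j) (R (j + 1)) (S j) where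
  first := hW.apply_mark j
  last := hW.apply_mark (j + 1)
  second := by
    have hmark := notMem_range_of_lt_of_lt hR (Nat.lt_succ_self (R j)) hgap
    by_cases hstep : IsStep R S (R j + 1)
    · exact Or.inr (hW.apply_step (by omega) hmark hstep)
    · exact Or.inl (hW.apply_other (by omega) hmark hstep)
  inner {n} hn hlt := by
    have hmark : R j + n ∉ Set.range R := notMem_range_of_lt_of_lt hR (by omega) hlt
    have hiff := isStep_add_iff_dvd hR hj hS hn hlt
    split_ifs with hdvd
    · exact hW.apply_step (by omega) hmark (hiff.2 hdvd)
    · exact hW.apply_other (by omega) hmark (hiff.not.2 hdvd)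

namespace IsBlock

lemma apply_add_period (h : IsBlock a b c d R₀ R₁ s) {i : ℕ} (hi : R₀ + 1 < i) (his : i + s < R₁) :
    a (i + s) = a i := by
  obtain ⟨n, rfl⟩ := Nat.exists_eq_add_of_le (show R₀ ≤ i by omega)
  rw [add_assoc, h.inner (by omega) (by omega), h.inner (by omega) (by omega)]
  simp only [Nat.dvd_add_left (dvd_refl s)]

lemma last_ne (h : IsBlock a b c d R₀ R₁ s) (hbc : b ≠ c) (hcd : c ≠ d) (hs : 0 < s)
    (hgap : R₀ + s + 1 < R₁) : a R₁ ≠ a (R₁ - s) := by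
  obtain ⟨n, hn⟩ := Nat.exists_eq_add_of_le (show R₀ ≤ R₁ - s by omega)
  rw [h.last, hn, h.inner (by omega) (by omega)]
  split_ifs
  exacts [hcd, hbc.symm]

lemma apply_add_add (h : IsBlock a b c d R₀ R₁ s) (hgap : R₀ + 2 * s < R₁) {i : ℕ} (hi : 1 ≤ i)
    (his : i < s) : a (R₀ + s + i) = b := by
  rw [add_assoc, h.inner (by omega) (by omega), if_neg]
  rw [Nat.dvd_add_right (dvd_refl s)]
  exact Nat.not_dvd_of_pos_of_lt hi his

lemma apply_add_mul (h : IsBlock a b c d R₀ R₁ s) (hs : 2 ≤ s) {m : ℕ} (hm : 1 ≤ m)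
    (hgap : R₀ + s * m < R₁) : a (R₀ + s * m) = d := by
  rw [h.inner (by nlinarith) hgap, if_pos (dvd_mul_right s m)]

lemma exists_start (h : IsBlock a b c d R₀ R₁ s) (hbd : b ≠ d) (hcd : c ≠ d) (hs : 2 ≤ s)
    (hgap : R₀ + 2 * s < R₁) :
    ∃ t, R₀ ≤ t ∧ t ≤ R₀ + 1 ∧ a (t + s) ≠ a t ∧ ∀ i, t < i → i + s < R₁ → a (i + s) = a i := by
  have hb : a (R₀ + 1 + s) = b := by
    rw [add_right_comm]
    exact h.apply_add_add hgap le_rfl hs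
  rcases h.second with hsecond | hsecond
  · refine ⟨R₀, le_rfl, by omega, ?_, fun i hi his => ?_⟩
    · have hd := h.apply_add_mul hs le_rfl (by omega)
      rw [mul_one] at hd
      rw [hd, h.first]
      exact hcd.symm
    · obtain rfl | hi := Nat.eq_or_lt_of_le (Nat.succ_le_of_lt hi)
      · exact hb.trans hsecond.symm
      · exact h.apply_add_period hi his
  · exact ⟨R₀ + 1, by omega, le_rfl, by rwa [hb, hsecond], fun i => h.apply_add_period⟩

lemma count_le [DecidableEq T] (h : IsBlock a b c d R₀ R₁ s) (hle : R₀ ≤ R₁) {k : ℕ}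
    (hk : R₁ ≤ R₀ + k * s) :
    Nat.count (fun i => a i ≠ b) R₁ ≤ Nat.count (fun i => a i ≠ b) R₀ + (k + 1) := by
  obtain ⟨l, rfl⟩ := Nat.exists_eq_add_of_le hle
  rw [Nat.count_add, Nat.count_eq_card_filter_range _ l]
  have hsub : (Finset.range l).filter (fun i => a (R₀ + i) ≠ b) ⊆
      insert 1 ((Finset.range k).image (· * s)) := by
    intro i hi
    simp only [Finset.mem_filter, Finset.mem_range] at hi
    simp only [Finset.mem_insert, Finset.mem_image, Finset.mem_range]
    by_cases hdvd : s ∣ i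
    · obtain ⟨m, rfl⟩ := hdvd
      exact Or.inr ⟨m, by nlinarith, mul_comm m s⟩
    · refine Or.inl (by_contra fun hi1 => hi.2 ?_)
      have hi0 : i ≠ 0 := by rintro rfl; simp at hdvd
      rw [h.inner (by omega) (by omega), if_neg hdvd]
  refine Nat.add_le_add_left ((Finset.card_le_card hsub).trans
    ((Finset.card_insert_le _ _).trans (Nat.succ_le_succ ?_))) _
  exact Finset.card_image_le.trans_eq (Finset.card_range k)

lemma exists_quadSize {a : ℕ → Fq[X]} {b c d : Fq[X]} {ξ : K Fq} (hξ : IsCFOf Fq ξ a)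
    (h : IsBlock a b c d R₀ R₁ s) (hbc : b ≠ c) (hbd : b ≠ d) (hcd : c ≠ d) (hR₀ : 1 ≤ R₀)
    (hs : 2 ≤ s) (hgap : R₀ + 2 * s + 1 < R₁) :
    ∃ r, R₀ ≤ r + 1 ∧ r ≤ R₀ ∧ QuadSize ξ (periodQuad a (r + 1) s)
        ((a (r + s + 1) - a (r + 1)).natDegree + denomDeg a r + denomDeg a (r + s))
        (denomDeg a (r + 1 + s) - denomDeg a (r + 1))
        ((a R₁ - a (R₁ - s)).natDegree - denomDeg a (R₁ - s) - denomDeg a R₁) ∧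
      ∀ g, Polynomial.C g ∣ periodQuad a (r + 1) s → g ∣ b - d := by
  obtain ⟨t, hRt, htR, hstart, hper⟩ := h.exists_start hbd hcd hs (by omega)
  obtain ⟨r, rfl⟩ : ∃ r, t = r + 1 := ⟨t - 1, by omega⟩
  obtain ⟨k, hk⟩ : ∃ k, r + 1 + k + s + 1 = R₁ := ⟨R₁ - s - (r + 2), by omega⟩
  have hk' : R₁ - s = r + 1 + k + 1 := by omega
  refine ⟨r, hRt, by omega, ?_, fun g hg => ?_⟩
  · have hlast := h.last_ne hbc hcd (by omega) (by omega)
    rw [hk', ← hk] at hlast ⊢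
    exact quadSize_periodQuad hξ (by omega) (by rwa [add_right_comm])
      (fun i hi hik => hper i hi (by omega)) hlast
  · obtain ⟨l, hl⟩ := Nat.exists_eq_add_of_le (show r + 1 ≤ R₀ + s by omega)
    have hg' : Polynomial.C g ∣ periodQuad a (R₀ + s) s := by
      rw [hl]
      exact dvd_periodQuad_add (fun i hi hil => hper i hi (by omega)) hg
    have hd := h.apply_add_mul hs one_le_two (by omega)
    rw [mul_two, ← add_assoc] at hd
    rw [← hd]
    exact dvd_sub_of_C_dvd_periodQuad hs (fun i hi his => h.apply_add_add (by omega) hi his) hg'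

end IsBlock

end Word

section Floor

lemma le_floor_sub_div_iff {x y m : ℤ} {s : ℕ} (hm : 1 ≤ m) :
    m ≤ ⌊((x - (y - 1) : ℤ) : ℝ) / (s : ℝ)⌋ ↔ 0 < s ∧ y + m * s ≤ x + 1 := by
  rcases s.eq_zero_or_pos with rfl | hs
  · simpa using zero_lt_one.trans_le hm
  · rw [Int.le_floor, le_div_iff₀ (by exact_mod_cast hs), and_iff_right hs]
    norm_cast
    constructor <;> intro h <;> linarith

lemma cast_floor_pow {w : ℝ} (hw : 0 ≤ w) (i : ℕ) : ⌊w ^ i⌋ = (⌊w ^ i⌋₊ : ℤ) :=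
  (Int.natCast_floor_eq_floor (pow_nonneg hw i)).symm

lemma mem_range_floor_pow_iff {w : ℝ} (hw : 0 ≤ w) {n : ℕ} :
    n ∈ Set.range (fun i => ⌊w ^ i⌋₊) ↔ ∃ i : ℕ, (n : ℤ) = ⌊w ^ i⌋ := by
  simp only [Set.mem_range, cast_floor_pow hw, Nat.cast_inj, eq_comm]

lemma isStep_floor_pow_iff {w η : ℝ} (hw : 0 ≤ w) (hη : 0 ≤ η) {M : ℕ → ℤ}
    (hM : ∀ i : ℕ, 1 ≤ i →
      M i = ⌊(((⌊w ^ (i + 1)⌋ - ⌊w ^ i - 1⌋ : ℤ)) : ℝ) / ((⌊η * w ^ i⌋ : ℤ) : ℝ)⌋) {n : ℕ} :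
    IsStep (fun i => ⌊w ^ i⌋₊) (fun i => ⌊η * w ^ i⌋₊) n ↔
      ∃ j : ℕ, 1 ≤ j ∧ ∃ m : ℤ, 1 ≤ m ∧ m ≤ M j ∧ (n : ℤ) = ⌊w ^ j⌋ + m * ⌊η * w ^ j⌋ := by
  refine exists_congr fun j => and_congr_right fun hj => ?_
  have hS : ⌊η * w ^ j⌋ = (⌊η * w ^ j⌋₊ : ℤ) :=
    (Int.natCast_floor_eq_floor (by positivity)).symm
  rw [hM j hj, Int.floor_sub_one, hS, Int.cast_natCast]
  simp only [cast_floor_pow hw]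
  constructor
  · rintro ⟨m, hm, hs, hle, rfl⟩
    refine ⟨m, by exact_mod_cast hm, (le_floor_sub_div_iff (by exact_mod_cast hm)).2 ⟨hs, ?_⟩, ?_⟩
    · exact_mod_cast hle
    · push_cast; rfl
  · rintro ⟨m, hm, hle, heq⟩
    obtain ⟨hs, hle⟩ := (le_floor_sub_div_iff hm).1 hle
    lift m to ℕ using by omega
    exact ⟨m, by exact_mod_cast hm, hs, by exact_mod_cast hle, by exact_mod_cast heq⟩

lemma isSteppedWord_floor_pow {T : Type*} {a : ℕ → T} {b c d : T} {w η : ℝ} (hw : 1 ≤ w)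
    (hη : 0 ≤ η) {M : ℕ → ℤ}
    (hM : ∀ i : ℕ, 1 ≤ i →
      M i = ⌊(((⌊w ^ (i + 1)⌋ - ⌊w ^ i - 1⌋ : ℤ)) : ℝ) / ((⌊η * w ^ i⌋ : ℤ) : ℝ)⌋)
    (hac : ∀ n : ℕ, 1 ≤ n → (∃ i : ℕ, (n : ℤ) = ⌊w ^ i⌋) → a n = c)
    (had : ∀ n : ℕ, 1 ≤ n → (¬ ∃ i : ℕ, (n : ℤ) = ⌊w ^ i⌋) →
      (∃ j : ℕ, 1 ≤ j ∧ ∃ m : ℤ, 1 ≤ m ∧ m ≤ M j ∧ (n : ℤ) = ⌊w ^ j⌋ + m * ⌊η * w ^ j⌋) →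
      a n = d)
    (hab : ∀ n : ℕ, 1 ≤ n → (¬ ∃ i : ℕ, (n : ℤ) = ⌊w ^ i⌋) →
      (¬ ∃ j : ℕ, 1 ≤ j ∧ ∃ m : ℤ, 1 ≤ m ∧ m ≤ M j ∧ (n : ℤ) = ⌊w ^ j⌋ + m * ⌊η * w ^ j⌋) →
      a n = b) :
    IsSteppedWord a b c d (fun i => ⌊w ^ i⌋₊) (fun i => ⌊η * w ^ i⌋₊) := by
  have hw0 : 0 ≤ w := zero_le_one.trans hw
  refine ⟨fun i => hac _ (Nat.floor_pos.2 (one_le_pow₀ hw)) ⟨i, (cast_floor_pow hw0 i).symm⟩,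
    fun hn hmark hstep => ?_, fun hn hmark hstep => ?_⟩
  all_goals
    rw [mem_range_floor_pow_iff hw0] at hmark
    rw [isStep_floor_pow_iff hw0 hη hM] at hstep
  exacts [had _ hn hmark hstep, hab _ hn hmark hstep]

end Floor

open Asymptotics in
lemma isLittleO_natCast_of_monotone {f : ℕ → ℝ} (hf : Monotone f) (hf₀ : ∀ n, 0 ≤ f n) {R : ℕ → ℕ}
    (hR : Tendsto R atTop atTop) (hfR : (fun j => f (R (j + 1))) =o[atTop] fun j => (R j : ℝ)) :
    f =o[atTop] fun n : ℕ => (n : ℝ) := by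
  refine IsLittleO.of_bound fun ε hε => ?_
  obtain ⟨J, hJ⟩ := eventually_atTop.1 (hfR.bound hε)
  filter_upwards [eventually_ge_atTop (R J)] with n hn
  obtain ⟨j, hj, hle, hlt⟩ := exists_le_lt_succ_of_tendsto_atTop
    (tendsto_natCast_atTop_atTop.comp hR) (Nat.cast_le (α := ℝ).2 hn)
  have hbound := hJ j hj
  rw [Real.norm_of_nonneg (hf₀ _), Real.norm_natCast] at hbound ⊢
  calc f n ≤ f (R (j + 1)) := hf (Nat.cast_lt.1 hlt).le
    _ ≤ ε * R j := hbound
    _ ≤ ε * n := mul_le_mul_of_nonneg_left hle hε.le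

lemma exists_eventually_le_add_mul {u : ℕ → ℕ} {E : ℕ} (hu : ∀ᶠ j in atTop, u (j + 1) ≤ u j + E) :
    ∃ c, ∀ᶠ j in atTop, u j ≤ c + E * j := by
  obtain ⟨J, hJ⟩ := eventually_atTop.1 hu
  refine ⟨u J, eventually_atTop.2 ⟨J, fun j hj => ?_⟩⟩
  induction j, hj using Nat.le_induction with
  | base => exact Nat.le_add_right _ _
  | succ j hj ih => linarith [hJ j hj]

lemma abs_denomDeg_sub_le [DecidableEq F[X]] {a : ℕ → F[X]}
    (ha : ∀ n, 1 ≤ n → 1 ≤ (a n).natDegree) {D : ℕ} (hD : ∀ n, 1 ≤ n → (a n).natDegree ≤ D)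
    {b : F[X]} (hb : b.natDegree ≤ D) (n : ℕ) :
    |(denomDeg a n : ℝ) - b.natDegree * n| ≤ D * Nat.count (fun i => a i ≠ b) (n + 1) := by
  induction n with
  | zero => simp only [denomDeg_zero, Nat.cast_zero, mul_zero, sub_zero, abs_zero]; positivity
  | succ n ih =>
    rw [denomDeg_succ ha, Nat.count_succ]
    rw [abs_le] at ih ⊢
    have hD' : ((a (n + 1)).natDegree : ℝ) ≤ D := by exact_mod_cast hD (n + 1) (by omega)
    have hb' : (b.natDegree : ℝ) ≤ D := by exact_mod_cast hb
    split_ifs with h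
    · push_cast
      constructor <;> linarith [ih.1, ih.2, (a (n + 1)).natDegree.cast_nonneg (α := ℝ),
        b.natDegree.cast_nonneg (α := ℝ)]
    · rw [not_not.1 h]
      push_cast
      constructor <;> linarith [ih.1, ih.2]

section Growth

variable {w : ℝ}

lemma eventually_lt_of_tendsto_div_pow (hw : 0 < w) {u v : ℕ → ℝ} {x y : ℝ}
    (hu : Tendsto (fun k => u k / w ^ k) atTop (nhds x))
    (hv : Tendsto (fun k => v k / w ^ k) atTop (nhds y)) (hxy : x < y) :
    ∀ᶠ k in atTop, u k < v k := by
  filter_upwards [hu.eventually_lt hv hxy] with k hk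
  exact (div_lt_div_iff_of_pos_right (pow_pos hw k)).1 hk

lemma tendsto_add_div_pow {u v : ℕ → ℝ} {x y : ℝ}
    (hu : Tendsto (fun k => u k / w ^ k) atTop (nhds x))
    (hv : Tendsto (fun k => v k / w ^ k) atTop (nhds y)) :
    Tendsto (fun k => (u k + v k) / w ^ k) atTop (nhds (x + y)) :=
  (hu.add hv).congr fun _ => (add_div _ _ _).symm

lemma tendsto_sub_div_pow {u v : ℕ → ℝ} {x y : ℝ}
    (hu : Tendsto (fun k => u k / w ^ k) atTop (nhds x))
    (hv : Tendsto (fun k => v k / w ^ k) atTop (nhds y)) :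
    Tendsto (fun k => (u k - v k) / w ^ k) atTop (nhds (x - y)) :=
  (hu.sub hv).congr fun _ => (sub_div _ _ _).symm

lemma tendsto_const_div_pow (hw : 1 < w) (x : ℝ) :
    Tendsto (fun k : ℕ => x / w ^ k) atTop (nhds 0) :=
  (tendsto_pow_atTop_atTop_of_one_lt hw).const_div_atTop x

lemma tendsto_succ_div_pow (hw : 0 < w) {u : ℕ → ℝ} {x : ℝ}
    (hu : Tendsto (fun k => u k / w ^ k) atTop (nhds x)) :
    Tendsto (fun k => u (k + 1) / w ^ k) atTop (nhds (w * x)) := by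
  refine ((hu.comp (tendsto_add_atTop_nat 1)).const_mul w).congr fun k => ?_
  have := hw.ne'
  simp only [Function.comp_apply, pow_succ]
  field_simp

lemma tendsto_div_pow_of_bounded (hw : 1 < w) {u : ℕ → ℕ} {D : ℕ} (hu : ∀ᶠ k in atTop, u k ≤ D) :
    Tendsto (fun k => (u k : ℝ) / w ^ k) atTop (nhds 0) := by
  have hpos : ∀ k : ℕ, 0 < w ^ k := fun k => pow_pos (one_pos.trans hw) k
  refine squeeze_zero' (Eventually.of_forall fun k => div_nonneg (Nat.cast_nonneg _) (hpos k).le)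
    (hu.mono fun k hk => ?_) (tendsto_const_div_pow hw D)
  gcongr

lemma tendsto_atTop_of_tendsto_div_pow (hw : 1 < w) {u : ℕ → ℕ} {x : ℝ} (hx : 0 < x)
    (hu : Tendsto (fun k => (u k : ℝ) / w ^ k) atTop (nhds x)) : Tendsto u atTop atTop := by
  refine tendsto_natCast_atTop_iff (R := ℝ).1
    ((hu.pos_mul_atTop hx (tendsto_pow_atTop_atTop_of_one_lt hw)).congr fun k => ?_)
  exact div_mul_cancel₀ _ (pow_pos (one_pos.trans hw) k).ne'

lemma tendsto_floor_mul_pow_div_pow (hw : 1 < w) {x : ℝ} (hx : 0 ≤ x) :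
    Tendsto (fun k : ℕ => (⌊x * w ^ k⌋₊ : ℝ) / w ^ k) atTop (nhds x) :=
  (tendsto_nat_floor_mul_div_atTop hx).comp (tendsto_pow_atTop_atTop_of_one_lt hw)

open Asymptotics in
lemma tendsto_denomDeg_div_pow (hw : 1 < w) {a : ℕ → F[X]} {δ : ℝ}
    (ha : (fun n : ℕ => (denomDeg a n : ℝ) - δ * n) =o[atTop] fun n : ℕ => (n : ℝ)) {u : ℕ → ℕ}
    {x : ℝ} (hx : 0 < x) (hu : Tendsto (fun k => (u k : ℝ) / w ^ k) atTop (nhds x)) :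
    Tendsto (fun k => (denomDeg a (u k) : ℝ) / w ^ k) atTop (nhds (δ * x)) := by
  have hpos : ∀ k : ℕ, w ^ k ≠ 0 := fun k => (pow_pos (one_pos.trans hw) k).ne'
  have hbig : (fun k => (u k : ℝ)) =O[atTop] fun k => w ^ k :=
    isBigO_of_div_tendsto_nhds (Eventually.of_forall fun k h => absurd h (hpos k)) x hu
  have herr := ((ha.comp_tendsto (tendsto_atTop_of_tendsto_div_pow hw hx hu)).trans_isBigO
    hbig).tendsto_div_nhds_zero
  have hsum := herr.add (hu.const_mul δ)
  rw [zero_add] at hsum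
  refine hsum.congr fun k => ?_
  simp only [Function.comp_apply]
  ring

end Growth

section Blocks

variable {w η : ℝ} {R S : ℕ → ℕ} {D : ℕ}

open Asymptotics in
lemma isLittleO_succ_of_le_add (hw : 1 < w)
    (hR : Tendsto (fun j => (R j : ℝ) / w ^ j) atTop (nhds 1)) {u : ℕ → ℕ} {E : ℕ}
    (hu : ∀ᶠ j in atTop, u (j + 1) ≤ u j + E) :
    (fun j => (u (j + 1) : ℝ) + 1) =o[atTop] fun j => (R j : ℝ) := by
  obtain ⟨e, he⟩ := exists_eventually_le_add_mul hu
  have hone : (fun _ : ℕ => (1 : ℝ)) =o[atTop] fun j : ℕ => w ^ j := by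
    simpa using isLittleO_pow_const_const_pow_of_one_lt (R := ℝ) 0 hw
  have hpow : (fun j : ℕ => w ^ j) =O[atTop] fun j => (R j : ℝ) := by
    refine IsBigO.of_bound 2 ?_
    have hid : Tendsto (fun j : ℕ => w ^ j / w ^ j) atTop (nhds 1) :=
      tendsto_const_nhds.congr fun j => (div_self (pow_pos (one_pos.trans hw) j).ne').symm
    filter_upwards [eventually_lt_of_tendsto_div_pow (one_pos.trans hw) hid
      (tendsto_add_div_pow hR hR) (by norm_num)] with j hj
    rw [Real.norm_of_nonneg (pow_pos (one_pos.trans hw) j).le, Real.norm_natCast]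
    linarith
  have haff : (fun j : ℕ => (e + E + 1 : ℝ) * 1 + E * j) =o[atTop] fun j : ℕ => w ^ j :=
    (hone.const_mul_left _).add ((isLittleO_coe_const_pow_of_one_lt hw).const_mul_left _)
  refine (IsBigO.of_bound 1 ?_).trans_isLittleO (haff.trans_isBigO hpow)
  filter_upwards [(tendsto_add_atTop_nat 1).eventually he] with j hj
  have hj' : (u (j + 1) : ℝ) ≤ e + E * (j + 1) := by exact_mod_cast hj
  rw [Real.norm_of_nonneg (by positivity), Real.norm_of_nonneg (by positivity)]
  linarith

open Asymptotics in
lemma isLittleO_denomDeg_sub {a : ℕ → F[X]} {b c d : F[X]}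
    (ha : ∀ n, 1 ≤ n → 1 ≤ (a n).natDegree)
    (hD : ∀ n, 1 ≤ n → (a n).natDegree ≤ D) (hb : b.natDegree ≤ D) (hw : 1 < w) (hη : 0 < η)
    (hR : Tendsto (fun j => (R j : ℝ) / w ^ j) atTop (nhds 1))
    (hS : Tendsto (fun j => (S j : ℝ) / w ^ j) atTop (nhds η))
    (hblock : ∀ᶠ j in atTop, IsBlock a b c d (R j) (R (j + 1)) (S j)) :
    (fun n : ℕ => (denomDeg a n : ℝ) - b.natDegree * n) =o[atTop] fun n : ℕ => (n : ℝ) := by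
  classical
  have hw₀ := one_pos.trans hw
  set N := Nat.count fun i => a i ≠ b with hN
  obtain ⟨k, hk⟩ := exists_nat_gt (w / η)
  have hshort : ∀ᶠ j in atTop, (R (j + 1) : ℝ) < R j + S j * k :=
    eventually_lt_of_tendsto_div_pow hw₀ (tendsto_succ_div_pow hw₀ hR)
      (tendsto_add_div_pow hR ((hS.mul_const (k : ℝ)).congr fun j => by ring))
      (by rw [div_lt_iff₀ hη] at hk; linarith)
  have hle : ∀ᶠ j in atTop, (R j : ℝ) < R (j + 1) :=
    eventually_lt_of_tendsto_div_pow hw₀ hR (tendsto_succ_div_pow hw₀ hR) (by linarith)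
  have hcount : ∀ᶠ j in atTop, N (R (j + 1)) ≤ N (R j) + (k + 1) := by
    filter_upwards [hblock, hshort, hle] with j hj hshort hle
    exact hj.count_le (by exact_mod_cast hle.le) (by rw [mul_comm]; exact_mod_cast hshort.le)
  have hlittle : (fun n => (N (n + 1) : ℝ)) =o[atTop] fun n : ℕ => (n : ℝ) := by
    refine isLittleO_natCast_of_monotone
      (fun m n hmn => by exact_mod_cast Nat.count_monotone _ (Nat.succ_le_succ hmn))
      (fun n => Nat.cast_nonneg _) (tendsto_atTop_of_tendsto_div_pow hw one_pos hR)
      ((IsBigO.of_bound 1 (Eventually.of_forall fun j => ?_)).trans_isLittleO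
        (isLittleO_succ_of_le_add (u := fun j => N (R j)) hw hR hcount))
    rw [Real.norm_of_nonneg (by positivity), Real.norm_of_nonneg (by positivity), one_mul]
    rw [hN, Nat.count_succ]
    push_cast
    split_ifs <;> simp
  refine (IsBigO.of_bound 1 (Eventually.of_forall fun n => ?_)).trans_isLittleO
    (hlittle.const_mul_left D)
  rw [Real.norm_of_nonneg (by positivity : (0 : ℝ) ≤ D * N (n + 1)), one_mul]
  exact abs_denomDeg_sub_le ha hD hb n

end Blocks

section Family

variable {a : ℕ → Fq[X]} {b c d : Fq[X]} {ξ : K Fq} {w η : ℝ} {R S : ℕ → ℕ} {D : ℕ}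

lemma eventually_exists_quadSize (hξ : IsCFOf Fq ξ a) (hbc : b ≠ c) (hbd : b ≠ d) (hcd : c ≠ d)
    (hw : 1 < w) (hη : 0 < η) (hwη : 1 + 2 * η < w)
    (hR : Tendsto (fun j => (R j : ℝ) / w ^ j) atTop (nhds 1))
    (hS : Tendsto (fun j => (S j : ℝ) / w ^ j) atTop (nhds η))
    (hblock : ∀ᶠ j in atTop, IsBlock a b c d (R j) (R (j + 1)) (S j)) :
    ∀ᶠ j in atTop, ∃ r, S j < R (j + 1) ∧ R j ≤ r + 1 ∧ r ≤ R j ∧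
      QuadSize ξ (periodQuad a (r + 1) (S j))
        ((a (r + S j + 1) - a (r + 1)).natDegree + denomDeg a r + denomDeg a (r + S j))
        (denomDeg a (r + 1 + S j) - denomDeg a (r + 1))
        ((a (R (j + 1)) - a (R (j + 1) - S j)).natDegree - denomDeg a (R (j + 1) - S j)
          - denomDeg a (R (j + 1))) ∧
      ∀ g, Polynomial.C g ∣ periodQuad a (r + 1) (S j) → g ∣ b - d := by
  have hw₀ := one_pos.trans hw
  have hlong : ∀ᶠ j in atTop, ((R j : ℝ) + (S j + S j)) + 1 < R (j + 1) :=
    eventually_lt_of_tendsto_div_pow hw₀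
      (tendsto_add_div_pow (tendsto_add_div_pow hR (tendsto_add_div_pow hS hS))
        (tendsto_const_div_pow hw 1)) (tendsto_succ_div_pow hw₀ hR) (by linarith)
  have hR₁ := (tendsto_atTop_of_tendsto_div_pow hw one_pos hR).eventually_ge_atTop 1
  have hS₂ := (tendsto_atTop_of_tendsto_div_pow hw hη hS).eventually_ge_atTop 2
  filter_upwards [hblock, hlong, hR₁, hS₂] with j hj hlong hR₁ hS₂
  have hgap : R j + 2 * S j + 1 < R (j + 1) := by
    rw [two_mul]
    exact_mod_cast hlong
  obtain ⟨r, hr⟩ := hj.exists_quadSize hξ hbc hbd hcd hR₁ hS₂ hgap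
  exact ⟨r, by omega, hr⟩

lemma tendsto_natDegree_sub_div_pow {a : ℕ → F[X]} (hw : 1 < w)
    (hD : ∀ n, 1 ≤ n → (a n).natDegree ≤ D)
    {u v : ℕ → ℕ} (huv : ∀ᶠ j in atTop, 1 ≤ u j ∧ 1 ≤ v j) :
    Tendsto (fun j => ((a (u j) - a (v j)).natDegree : ℝ) / w ^ j) atTop (nhds 0) :=
  tendsto_div_pow_of_bounded hw <| huv.mono fun _ hj =>
    (natDegree_sub_le _ _).trans (max_le (hD _ hj.1) (hD _ hj.2))

lemma tendsto_div_pow_of_le_of_le (hw : 1 < w) {u v : ℕ → ℕ} {x : ℝ}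
    (hv : Tendsto (fun j => (v j : ℝ) / w ^ j) atTop (nhds x))
    (huv : ∀ᶠ j in atTop, v j ≤ u j + 1 ∧ u j ≤ v j) :
    Tendsto (fun j => (u j : ℝ) / w ^ j) atTop (nhds x) := by
  have hlow := tendsto_sub_div_pow hv (tendsto_const_div_pow hw 1)
  rw [sub_zero] at hlow
  have hpos : ∀ j : ℕ, 0 ≤ w ^ j := fun j => (pow_pos (one_pos.trans hw) j).le
  refine tendsto_of_tendsto_of_tendsto_of_le_of_le' hlow hv
    (huv.mono fun j hj => ?_) (huv.mono fun j hj => ?_)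
  · exact div_le_div_of_nonneg_right (by rw [sub_le_iff_le_add]; exact_mod_cast hj.1) (hpos j)
  · exact div_le_div_of_nonneg_right (by exact_mod_cast hj.2) (hpos j)

section Degree

open Asymptotics

variable {a : ℕ → F[X]} {δ : ℝ} {r : ℕ → ℕ}

lemma tendsto_lead_div_pow (hw : 1 < w) (hη : 0 < η)
    (ha : (fun n : ℕ => (denomDeg a n : ℝ) - δ * n) =o[atTop] fun n : ℕ => (n : ℝ))
    (hD : ∀ n, 1 ≤ n → (a n).natDegree ≤ D)
    (hr : Tendsto (fun j => (r j : ℝ) / w ^ j) atTop (nhds 1))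
    (hS : Tendsto (fun j => (S j : ℝ) / w ^ j) atTop (nhds η)) :
    Tendsto (fun j => (((a (r j + S j + 1) - a (r j + 1)).natDegree : ℝ) + denomDeg a (r j)
      + denomDeg a (r j + S j)) / w ^ j) atTop (nhds (δ * (2 + η))) := by
  have hsub := tendsto_natDegree_sub_div_pow hw hD (u := fun j => r j + S j + 1)
    (v := fun j => r j + 1) (Eventually.of_forall fun j => by omega)
  have hstart := tendsto_denomDeg_div_pow hw ha one_pos hr
  have hend := tendsto_denomDeg_div_pow hw ha (u := fun j => r j + S j) (x := 1 + η)
    (by positivity) (by exact_mod_cast tendsto_add_div_pow hr hS)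
  convert tendsto_add_div_pow (tendsto_add_div_pow hsub hstart) hend using 2
  ring

lemma tendsto_deriv_div_pow (hw : 1 < w) (hη : 0 < η)
    (ha : (fun n : ℕ => (denomDeg a n : ℝ) - δ * n) =o[atTop] fun n : ℕ => (n : ℝ))
    (hr : Tendsto (fun j => (r j : ℝ) / w ^ j) atTop (nhds 1))
    (hS : Tendsto (fun j => (S j : ℝ) / w ^ j) atTop (nhds η)) :
    Tendsto (fun j => ((denomDeg a (r j + 1 + S j) : ℝ) - denomDeg a (r j + 1)) / w ^ j) atTop
      (nhds (δ * η)) := by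
  have hr₁ := tendsto_add_div_pow hr (tendsto_const_div_pow hw 1)
  rw [add_zero] at hr₁
  have hstart := tendsto_denomDeg_div_pow hw ha (u := fun j => r j + 1) one_pos
    (by exact_mod_cast hr₁)
  have hend := tendsto_denomDeg_div_pow hw ha (u := fun j => r j + 1 + S j) (x := 1 + η)
    (by positivity) (by exact_mod_cast tendsto_add_div_pow hr₁ hS)
  convert tendsto_sub_div_pow hend hstart using 2
  ring

lemma tendsto_value_div_pow (hw : 1 < w) (hηw : η < w)
    (ha : (fun n : ℕ => (denomDeg a n : ℝ) - δ * n) =o[atTop] fun n : ℕ => (n : ℝ))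
    (hD : ∀ n, 1 ≤ n → (a n).natDegree ≤ D)
    (hR : Tendsto (fun j => (R j : ℝ) / w ^ j) atTop (nhds 1))
    (hS : Tendsto (fun j => (S j : ℝ) / w ^ j) atTop (nhds η))
    (hlt : ∀ᶠ j in atTop, S j < R (j + 1)) :
    Tendsto (fun j => (((a (R (j + 1)) - a (R (j + 1) - S j)).natDegree : ℝ)
      - denomDeg a (R (j + 1) - S j) - denomDeg a (R (j + 1))) / w ^ j) atTop
      (nhds (-(δ * (2 * w - η)))) := by
  have hw₀ := one_pos.trans hw
  have hR' := tendsto_succ_div_pow hw₀ hR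
  rw [mul_one] at hR'
  have hRS : Tendsto (fun j => ((R (j + 1) - S j : ℕ) : ℝ) / w ^ j) atTop (nhds (w - η)) :=
    (tendsto_sub_div_pow hR' hS).congr' <| hlt.mono fun j hj => by
      simp only [Nat.cast_sub hj.le]
  have hsub := tendsto_natDegree_sub_div_pow hw hD (u := fun j => R (j + 1))
    (v := fun j => R (j + 1) - S j) (hlt.mono fun j hj => by omega)
  have hlast := tendsto_denomDeg_div_pow hw ha hw₀ hR'
  have hprev := tendsto_denomDeg_div_pow hw ha (sub_pos.2 hηw) hRS
  convert tendsto_sub_div_pow (tendsto_sub_div_pow hsub hprev) hlast using 2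
  ring

end Degree

theorem exists_quadFamily (hξ : IsCFOf Fq ξ a) (hD : ∀ n, 1 ≤ n → (a n).natDegree ≤ D)
    (hb : 1 ≤ b.natDegree) (hbD : b.natDegree ≤ D) (hbc : b ≠ c) (hbd : b ≠ d) (hcd : c ≠ d)
    (hη : 0 < η) (hwη : 2 + η < w)
    (hgap : w * ((1 + η) * (2 + η)) < (w - 2 - η) * (w - 1 - η))
    (hR : Tendsto (fun j => (R j : ℝ) / w ^ j) atTop (nhds 1))
    (hS : Tendsto (fun j => (S j : ℝ) / w ^ j) atTop (nhds η))
    (hblock : ∀ᶠ j in atTop, IsBlock a b c d (R j) (R (j + 1)) (S j)) :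
    ∃ P A B C, QuadFamily ξ (b - d) w (b.natDegree * (2 + η)) (b.natDegree * η)
      (b.natDegree * (2 * w - η)) P A B C := by
  have hw : 1 < w := by linarith
  have hw₀ : 0 < w := one_pos.trans hw
  have hwη' : 1 + 2 * η < w := by
    have hlt : (1 + η) * (2 + η) < w := lt_of_mul_lt_mul_left (hgap.trans (by nlinarith)) hw₀.le
    nlinarith
  have hδ : (0 : ℝ) < b.natDegree := by exact_mod_cast hb
  obtain ⟨r, hr⟩ :=
    (eventually_exists_quadSize hξ hbc hbd hcd hw hη hwη' hR hS hblock).choice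
  have ha := isLittleO_denomDeg_sub hξ.1 hD hbD hw hη hR hS hblock
  have hr₁ : Tendsto (fun j => (r j : ℝ) / w ^ j) atTop (nhds 1) :=
    tendsto_div_pow_of_le_of_le hw hR (hr.mono fun j hj => ⟨hj.2.1, hj.2.2.1⟩)
  exact ⟨_, _, _, _,
    { quadSize := hr.mono fun j hj => hj.2.2.2.1
      dvd_of_C_dvd := hr.mono fun j hj => hj.2.2.2.2
      tendsto_lead := tendsto_lead_div_pow hw hη ha hD hr₁ hS
      tendsto_deriv := tendsto_deriv_div_pow hw hη ha hr₁ hS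
      tendsto_value := tendsto_value_div_pow hw (by linarith) ha hD hR hS
        (hr.mono fun j hj => hj.1)
      one_lt := hw
      deriv_pos := by positivity
      deriv_lt := by linarith
      two_mul_le := by nlinarith
      gap := by
        have := mul_lt_mul_of_pos_left hgap (show (0 : ℝ) < 4 * (b.natDegree : ℝ) ^ 2 by positivity)
        linarith }⟩

end Family

lemma kabs_le_one_of_isCFOf {a : ℕ → Fq[X]} {ξ : K Fq} (hξ : IsCFOf Fq ξ a) (ha : a 0 = 0) :
    kabs Fq ξ ≤ 1 := by
  have hlin : linForm a ξ 1 = ξ := by simp [linForm, qSeq, pSeq, ha]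
  rw [← hlin, kabs_linForm hξ 1]
  exact Real.rpow_le_one_of_one_le_of_nonpos one_lt_q.le (neg_nonpos.2 (Nat.cast_nonneg _))

lemma strictMono_floor_pow {w : ℝ} (hw : 2 ≤ w) : StrictMono fun i : ℕ => ⌊w ^ i⌋₊ := by
  refine strictMono_nat_of_lt_succ fun i => ?_
  have hone : 1 ≤ w ^ i := one_le_pow₀ (by linarith)
  refine Nat.lt_of_lt_of_le (Nat.lt_succ_self _) (Nat.le_floor ?_)
  have := Nat.floor_le (zero_le_one.trans hone)
  rw [Nat.cast_succ, pow_succ]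
  nlinarith

lemma IsSteppedWord.eventually_isBlock {T : Type*} {a : ℕ → T} {b c d : T} {R S : ℕ → ℕ}
    {w η : ℝ} (hW : IsSteppedWord a b c d R S) (hRmono : StrictMono R) (hw : 1 < w) (hη : 0 < η)
    (hR : Tendsto (fun j => (R j : ℝ) / w ^ j) atTop (nhds 1))
    (hS : Tendsto (fun j => (S j : ℝ) / w ^ j) atTop (nhds η)) :
    ∀ᶠ j in atTop, IsBlock a b c d (R j) (R (j + 1)) (S j) := by
  have hw₀ := one_pos.trans hw
  have hgap : ∀ᶠ j in atTop, (R j : ℝ) + 1 < R (j + 1) :=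
    eventually_lt_of_tendsto_div_pow hw₀ (tendsto_add_div_pow hR (tendsto_const_div_pow hw 1))
      (tendsto_succ_div_pow hw₀ hR) (by linarith)
  filter_upwards [eventually_ge_atTop 1, hgap,
    (tendsto_atTop_of_tendsto_div_pow hw hη hS).eventually_gt_atTop 0] with j hj hgap hSj
  exact hW.isBlock hRmono hj hSj (by exact_mod_cast hgap)

theorem stmt1_general (Fq : Type) [Field Fq] [Fintype Fq]
    (v : L Fq → ℝ) (hv : IsAbsExt Fq v) (w η : ℝ)
    (hη : 0 < η) (hwη : 2 + η < w)
    (hgap : w * ((1 + η) * (2 + η)) < (w - 2 - η) * (w - 1 - η))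
    (b c d : Fq[X]) (hbc : b ≠ c) (hbd : b ≠ d) (hcd : c ≠ d)
    (hb : 1 ≤ b.natDegree)
    (mi : ℕ → ℤ)
    (hmi : ∀ i : ℕ, 1 ≤ i →
      mi i = ⌊(((⌊w ^ (i + 1)⌋ - ⌊w ^ i - 1⌋ : ℤ)) : ℝ) / ((⌊η * w ^ i⌋ : ℤ) : ℝ)⌋)
    (a : ℕ → Fq[X]) (ha₀ : a 0 = 0)
    (hac : ∀ n : ℕ, 1 ≤ n → (∃ i : ℕ, (n : ℤ) = ⌊w ^ i⌋) → a n = c)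
    (had : ∀ n : ℕ, 1 ≤ n → (¬ ∃ i : ℕ, (n : ℤ) = ⌊w ^ i⌋) →
      (∃ j : ℕ, 1 ≤ j ∧ ∃ m : ℤ, 1 ≤ m ∧ m ≤ mi j ∧ (n : ℤ) = ⌊w ^ j⌋ + m * ⌊η * w ^ j⌋) →
      a n = d)
    (hab : ∀ n : ℕ, 1 ≤ n → (¬ ∃ i : ℕ, (n : ℤ) = ⌊w ^ i⌋) →
      (¬ ∃ j : ℕ, 1 ≤ j ∧ ∃ m : ℤ, 1 ≤ m ∧ m ≤ mi j ∧ (n : ℤ) = ⌊w ^ j⌋ + m * ⌊η * w ^ j⌋) →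
      a n = b)
    (ξ : K Fq) (hξ : IsCFOf Fq ξ a) :
    wStarExp Fq v 2 ξ = (((2 * w - 2 - η) / (2 + η) : ℝ) : EReal) ∧
    wExp Fq 2 ξ = (((2 * w - η) / (2 + η) : ℝ) : EReal) ∧
    wExp Fq 2 ξ - wStarExp Fq v 2 ξ = ((2 / (2 + η) : ℝ) : EReal) := by
  have hw₁ : 1 < w := by linarith
  have hW := isSteppedWord_floor_pow hw₁.le hη.le hmi hac had hab
  have hR : Tendsto (fun j => (⌊w ^ j⌋₊ : ℝ) / w ^ j) atTop (nhds 1) := by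
    simpa only [one_mul] using tendsto_floor_mul_pow_div_pow hw₁ zero_le_one
  have hS := tendsto_floor_mul_pow_div_pow hw₁ hη.le
  have hblock := hW.eventually_isBlock (strictMono_floor_pow (by linarith)) hw₁ hη hR hS
  have hD : ∀ n, 1 ≤ n → (a n).natDegree ≤ b.natDegree + c.natDegree + d.natDegree := fun n hn => by
    rcases hW.eq_or_eq_or_eq hn with h | h | h <;> rw [h] <;> omega
  obtain ⟨P, A, B, C, hF⟩ := exists_quadFamily hξ hD hb (by omega) hbc hbd hcd hη hwη hgap
    hR hS hblock
  have hbad := hξ.isBadlyApproximable hD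
  have hξ₁ := kabs_le_one_of_isCFOf hξ ha₀
  have hδ : (b.natDegree : ℝ) ≠ 0 := by exact_mod_cast (Nat.one_le_iff_ne_zero.1 hb)
  rw [hF.wStarExp_two_eq hv (sub_ne_zero.2 hbd) hbad hξ₁,
    hF.wExp_two_eq (sub_ne_zero.2 hbd) hbad hξ₁, ← EReal.coe_sub]
  refine ⟨congrArg _ ?_, congrArg _ ?_, congrArg _ ?_⟩ <;> field_simp <;> ring

lemma lt_div_of_lt_sqrt {w η : ℝ} (hw : 25 ≤ w) (hη : η < Real.sqrt w / 4) : η < w / 20 := by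
  have h5 : 5 ≤ Real.sqrt w := Real.le_sqrt_of_sq_le (by linarith)
  nlinarith [Real.mul_self_sqrt (show 0 ≤ w by linarith)]

lemma mul_lt_mul_of_lt_sqrt {w η : ℝ} (hw : 25 ≤ w) (hη₀ : 0 < η) (hη : η < Real.sqrt w / 4) :
    w * ((1 + η) * (2 + η)) < (w - 2 - η) * (w - 1 - η) := by
  have hη' := lt_div_of_lt_sqrt hw hη
  have hsq : η ^ 2 ≤ w / 16 := by
    calc η ^ 2 ≤ (Real.sqrt w / 4) ^ 2 := by gcongr
      _ = w / 16 := by rw [div_pow, Real.sq_sqrt (by linarith)]; norm_num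
  have hleft : (1 + η) * (2 + η) ≤ 2 + 3 * (w / 20) + w / 16 := by nlinarith
  calc w * ((1 + η) * (2 + η)) ≤ w * (2 + 3 * (w / 20) + w / 16) := by gcongr
    _ < (w - 2 - w / 20) * (w - 1 - w / 20) := by nlinarith
    _ ≤ (w - 2 - η) * (w - 1 - η) := by gcongr <;> linarith

theorem stmt1 (Fq : Type) [Field Fq] [Fintype Fq]
    (v : L Fq → ℝ) (hv : IsAbsExt Fq v) (w η : ℝ)
    (hw : 25 ≤ w) (hη0 : 0 < η) (hη1 : η < Real.sqrt w / 4)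
    (b c d : Polynomial Fq) (hbc : b ≠ c) (hbd : b ≠ d) (hcd : c ≠ d)
    (hb : 1 ≤ b.natDegree) (hc : 1 ≤ c.natDegree) (hd : 1 ≤ d.natDegree)
    (mi : ℕ → ℤ)
    (hmi : ∀ i : ℕ, 1 ≤ i →
      mi i = ⌊(((⌊w ^ (i + 1)⌋ - ⌊w ^ i - 1⌋ : ℤ)) : ℝ) / ((⌊η * w ^ i⌋ : ℤ) : ℝ)⌋)
    (a : ℕ → Polynomial Fq) (ha0 : a 0 = 0)
    (hac : ∀ n : ℕ, 1 ≤ n → (∃ i : ℕ, (n : ℤ) = ⌊w ^ i⌋) → a n = c)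
    (had : ∀ n : ℕ, 1 ≤ n → (¬ ∃ i : ℕ, (n : ℤ) = ⌊w ^ i⌋) →
      (∃ j : ℕ, 1 ≤ j ∧ ∃ m : ℤ, 1 ≤ m ∧ m ≤ mi j ∧ (n : ℤ) = ⌊w ^ j⌋ + m * ⌊η * w ^ j⌋) →
      a n = d)
    (hab : ∀ n : ℕ, 1 ≤ n → (¬ ∃ i : ℕ, (n : ℤ) = ⌊w ^ i⌋) →
      (¬ ∃ j : ℕ, 1 ≤ j ∧ ∃ m : ℤ, 1 ≤ m ∧ m ≤ mi j ∧ (n : ℤ) = ⌊w ^ j⌋ + m * ⌊η * w ^ j⌋) →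
      a n = b)
    (ξ : K Fq) (hξ : IsCFOf Fq ξ a) :
    wStarExp Fq v 2 ξ = (((2 * w - 2 - η) / (2 + η) : ℝ) : EReal) ∧
    wExp Fq 2 ξ = (((2 * w - η) / (2 + η) : ℝ) : EReal) ∧
    wExp Fq 2 ξ - wStarExp Fq v 2 ξ = ((2 / (2 + η) : ℝ) : EReal) := by
  exact stmt1_general Fq v hv w η hη0 (by linarith [lt_div_of_lt_sqrt hw hη1])
    (mul_lt_mul_of_lt_sqrt hw hη0 hη1) b c d hbc hbd hcd hb mi hmi a ha0 hac had hab ξ hξ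

end Ooto
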